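/- arXiv:2510.01466 — 4 statements merged into one kernel-verified Lean document; each statement's English description precedes it below -/
import Mathlib

section
/- For all integers t ≥ 1 and Δ ≥ 3, there exists an open set F ⊆ ℂ containing the ray [0, ∞) such that for every finite S_{t,t,t}-free simple graph G of maximum degree at most Δ and every λ ∈ F, the univariate independence polynomial satisfies Z_{G,λ} ≠ 0. -/
attribute [local instance] Classical.propDecidable

/-- Multivariate independence polynomial of the induced subgraph `G[W]`:
the sum over all independent sets `S ⊆ W` of `∏ v ∈ S, lam v`. -/
noncomputable def indepPolyOn {V : Type*} [Fintype V] (G : SimpleGraph V)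
    (lam : V → ℂ) (W : Finset V) : ℂ :=
  ∑ S ∈ W.powerset, if (∀ u ∈ S, ∀ v ∈ S, ¬ G.Adj u v) then ∏ v ∈ S, lam v else 0

/-- Multivariate independence polynomial `Z_{G,λ}`. -/
noncomputable def indepPoly {V : Type*} [Fintype V] (G : SimpleGraph V)
    (lam : V → ℂ) : ℂ :=
  indepPolyOn G lam Finset.univ

/-- The subdivided claw `S_{t,t,t}`: three paths of length `t` sharing one common
endpoint (the vertex `none`). -/
def subdividedClaw (t : ℕ) : SimpleGraph (Option (Fin 3 × Fin t)) :=
  SimpleGraph.fromRel (fun a b =>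
    match a, b with
    | none, some (_, j) => (j : ℕ) = 0
    | some (i, j), some (i', j') => i = i' ∧ (j : ℕ) + 1 = (j' : ℕ)
    | _, _ => False)

/-- The open parabolic region `R(k) = {z : (Im z)² < (1/k)·Re z + 1/(4k²)}`. -/
def parabR (k : ℝ) : Set ℂ := {z : ℂ | z.im ^ 2 < z.re / k + 1 / (4 * k ^ 2)}

/-- The closed halfplane `H(t) = {z : Re z ≥ t}`. -/
def halfH (t : ℝ) : Set ℂ := {z : ℂ | t ≤ z.re}

/-!
Explore `G` from a vertex: given the explored set `U`, let `A` be the set of its neighbours in the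
unexplored set `W`, choose an independent `T ⊆ A` and pass to `U ∪ T` and `W \ A`. By induction on
`W`, all the ratios `r = Z(W) / Z(W \ A)` met on the way satisfy `re r ≥ 1 / 2`. Indeed, grouping
the independent sets of `W` by their trace on `A` gives
`r = 1 + ∑ λ ^ |T| / r_T`, summed over the nonempty independent `T ⊆ A`, where `r_T` is the ratio
after choosing `T`. As `re r_T ≥ 1 / 2` means that `1 / r_T` lies in the disc `|w - 1| ≤ 1`, a
weight `μ = λ ^ |T|` with `|μ| ≤ re μ + ε` contributes at least `-ε` to the real part. So
`2 ^ |A| * ε ≤ 1 / 2` suffices.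

What remains is to bound `|A|` and `|T|`. The explored graph is layered: choosing only independent
`T` leaves edges between consecutive levels only. If two vertices of a level have a common ancestor
at level at least `t`, take one, `z`, of maximal level. Were `z` at least `t` levels above them, the
first `t` steps from `z` towards each of them, together with `t` steps from `z` back towards the
root, would form an induced `S_{t,t,t}`. Hence the descendants on a level of a vertex of level `t`
are pairwise at distance less than `2 * t`, and their number is bounded in terms of `t` and `Δ`.
-/

section LayeredGraphs

open Finset

variable {V : Type*} {G : SimpleGraph V} {U : Finset V} {ℓ : V → ℕ} {t Δ : ℕ}

theorem subdividedClaw_adj_none_some {i : Fin 3} {j : Fin t} :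
    (subdividedClaw t).Adj none (some (i, j)) ↔ (j : ℕ) = 0 := by
  simp [subdividedClaw]

theorem subdividedClaw_adj_some_some {i i' : Fin 3} {j j' : Fin t} :
    (subdividedClaw t).Adj (some (i, j)) (some (i', j')) ↔
      i = i' ∧ ((j : ℕ) + 1 = j' ∨ (j' : ℕ) + 1 = j) := by
  simp only [subdividedClaw, SimpleGraph.fromRel_adj]
  grind

/-- The legs `p 0`, `p 1`, `p 2` are indexed so that the common centre is `p i 0`. -/
theorem nonempty_subdividedClaw_embedding_of_legs {p : Fin 3 → ℕ → V}
    (hcentre : ∀ i, p i 0 = p 0 0)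
    (hstep : ∀ i, ∀ l < t, G.Adj (p i l) (p i (l + 1)))
    (hinj : ∀ i i', ∀ l ≤ t, ∀ l' ≤ t, p i l = p i' l' → l = l' ∧ (i = i' ∨ l = 0))
    (hadj : ∀ i i', ∀ l ≤ t, ∀ l' ≤ t, G.Adj (p i l) (p i' l') → l ≤ l' →
      l + 1 = l' ∧ (i = i' ∨ l = 0)) :
    Nonempty (subdividedClaw t ↪g G) := by
  let f : Option (Fin 3 × Fin t) → V
    | none => p 0 0
    | some (i, j) => p i (j + 1)
  have f_injective : Function.Injective f := by
    rintro (_ | ⟨i, j⟩) (_ | ⟨i', j'⟩) hf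
    · rfl
    · have := hinj 0 i' 0 (by omega) (j' + 1) (by omega) hf
      omega
    · have := hinj i 0 (j + 1) (by omega) 0 (by omega) hf
      omega
    · obtain ⟨hj, hi⟩ := hinj i i' (j + 1) (by omega) (j' + 1) (by omega) hf
      grind
  have adj_none_some (i : Fin 3) (j : Fin t) : G.Adj (p 0 0) (p i (j + 1)) ↔ (j : ℕ) = 0 := by
    constructor
    · intro h
      have := hadj 0 i 0 (by omega) (j + 1) (by omega) h (by omega)
      omega
    · intro hj
      simpa [hj, hcentre i] using hstep i 0 (by omega)
  have adj_some_some (i i' : Fin 3) (j j' : Fin t) (hjj' : j ≤ j') :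
      G.Adj (p i (j + 1)) (p i' (j' + 1)) ↔ i = i' ∧ (j : ℕ) + 1 = j' := by
    constructor
    · intro h
      have := hadj i i' (j + 1) (by omega) (j' + 1) (by omega) h (by omega)
      omega
    · rintro ⟨rfl, hj⟩
      rw [← hj]
      exact hstep i (j + 1) (by omega)
  refine ⟨⟨⟨f, f_injective⟩, ?_⟩⟩
  rintro (_ | ⟨i, j⟩) (_ | ⟨i', j'⟩)
  · simp
  · exact (adj_none_some i' j').trans subdividedClaw_adj_none_some.symm
  · rw [G.adj_comm, SimpleGraph.adj_comm _ (some _)]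
    exact (adj_none_some i j).trans subdividedClaw_adj_none_some.symm
  · rw [subdividedClaw_adj_some_some]
    rcases le_total j j' with hjj' | hjj'
    · refine (adj_some_some i i' j j' hjj').trans ?_
      omega
    · refine (G.adj_comm _ _).trans ((adj_some_some i' i j' j hjj').trans ?_)
      omega

/-- `y` is a parent of `x`: a neighbour of `x` in `U` lying one level lower. -/
def IsParent (G : SimpleGraph V) (U : Finset V) (ℓ : V → ℕ) (y x : V) : Prop :=
  y ∈ U ∧ x ∈ U ∧ G.Adj y x ∧ ℓ x = ℓ y + 1

/-- `z` is an ancestor of `x`: a path climbing one level at a time leads from `z` to `x`. -/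
abbrev IsAncestor (G : SimpleGraph V) (U : Finset V) (ℓ : V → ℕ) : V → V → Prop :=
  Relation.ReflTransGen (IsParent G U ℓ)

/-- The level function `ℓ` makes `G[U]` a rooted layered graph: one vertex at level `0`, a parent
for every other vertex, edges only between consecutive levels. Values of `ℓ` off `U` are
irrelevant. -/
structure IsLayering (G : SimpleGraph V) (U : Finset V) (ℓ : V → ℕ) : Prop where
  root_unique : ∀ x ∈ U, ∀ y ∈ U, ℓ x = 0 → ℓ y = 0 → x = y
  exists_parent : ∀ x ∈ U, 0 < ℓ x → ∃ y, IsParent G U ℓ y x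
  level_of_adj : ∀ x ∈ U, ∀ y ∈ U, G.Adj x y → ℓ x = ℓ y + 1 ∨ ℓ y = ℓ x + 1

namespace IsAncestor

variable {x y z : V}

theorem exists_walk (h : IsAncestor G U ℓ z x) : ∃ p : G.Walk z x, ℓ z + p.length = ℓ x := by
  induction h with
  | refl => exact ⟨.nil, rfl⟩
  | tail _ hyx ih =>
    obtain ⟨p, hp⟩ := ih
    obtain ⟨-, -, hadj, hlevel⟩ := hyx
    exact ⟨p.concat hadj, by rw [SimpleGraph.Walk.length_concat]; omega⟩

theorem level_le (h : IsAncestor G U ℓ z x) : ℓ z ≤ ℓ x := by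
  obtain ⟨p, hp⟩ := h.exists_walk
  omega

theorem mem (h : IsAncestor G U ℓ z x) (hx : x ∈ U) : z ∈ U := by
  rcases Relation.ReflTransGen.cases_head h with rfl | ⟨_, ⟨hz, -⟩, -⟩ <;> assumption

theorem exists_leg (h : IsAncestor G U ℓ z x) :
    ∃ a : ℕ → V, a 0 = z ∧
      (∀ l, ℓ z + l ≤ ℓ x → IsAncestor G U ℓ (a l) x ∧ ℓ (a l) = ℓ z + l) ∧
      ∀ l, ℓ z + l < ℓ x → G.Adj (a l) (a (l + 1)) := by
  induction h using Relation.ReflTransGen.head_induction_on with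
  | refl => exact ⟨fun _ ↦ x, rfl, fun l hl ↦ ⟨.refl, by grind⟩, fun l hl ↦ by omega⟩
  | @head z c hzc hcx ih =>
    obtain ⟨a, rfl, ha, hstep⟩ := ih
    obtain ⟨-, -, hadj, hlevel⟩ := id hzc
    refine ⟨fun | 0 => z | l + 1 => a l, rfl, ?_, ?_⟩
    · rintro (_ | l) hl
      · exact ⟨hcx.head hzc, rfl⟩
      · obtain ⟨hanc, hal⟩ := ha l (by omega)
        exact ⟨hanc, by grind⟩
    · rintro (_ | l) hl
      · exact hadj
      · exact hstep l (by omega)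

end IsAncestor

/-- The vertices reachable from `x` by a walk of length at most `k`. -/
noncomputable def walkBall [Fintype V] (G : SimpleGraph V) (k : ℕ) (x : V) : Finset V :=
  {y | ∃ p : G.Walk x y, p.length ≤ k}

theorem mem_walkBall [Fintype V] {k : ℕ} {x y : V} :
    y ∈ walkBall G k x ↔ ∃ p : G.Walk x y, p.length ≤ k := by
  simp [walkBall]

theorem card_walkBall_le [Fintype V] (hdeg : ∀ v, G.degree v ≤ Δ) (k : ℕ) (x : V) :
    #(walkBall G k x) ≤ (Δ + 1) ^ k := by
  induction k generalizing x with
  | zero =>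
    refine card_le_one_iff.mpr fun {y z} hy hz ↦ ?_
    obtain ⟨p, hp⟩ := mem_walkBall.mp hy
    obtain ⟨q, hq⟩ := mem_walkBall.mp hz
    rw [← p.eq_of_length_eq_zero (by omega), ← q.eq_of_length_eq_zero (by omega)]
  | succ k ih =>
    have hcover :
        walkBall G (k + 1) x ⊆ (insert x (G.neighborFinset x)).biUnion (walkBall G k) := by
      intro y hy
      obtain ⟨p, hp⟩ := mem_walkBall.mp hy
      rw [mem_biUnion]
      cases p with
      | nil => exact ⟨x, mem_insert_self _ _, mem_walkBall.mpr ⟨.nil, Nat.zero_le _⟩⟩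
      | @cons _ z _ hxz q =>
        exact ⟨z, by simp [hxz], mem_walkBall.mpr ⟨q, by simpa using hp⟩⟩
    calc #(walkBall G (k + 1) x) ≤ _ := card_le_card hcover
      _ ≤ #(insert x (G.neighborFinset x)) * (Δ + 1) ^ k :=
          card_biUnion_le_card_mul _ _ _ fun z _ ↦ ih z
      _ ≤ (Δ + 1) * (Δ + 1) ^ k := by
          gcongr
          exact (card_insert_le _ _).trans (Nat.succ_le_succ (hdeg x))
      _ = (Δ + 1) ^ (k + 1) := (pow_succ' _ _).symm

/-- Bound on the size of every level of a layered `S_{t,t,t}`-free graph of maximum degree `Δ`: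
at most `(Δ + 1) ^ t` ancestors at level `t`, each with at most `(Δ + 1) ^ (2 * t)` descendants
per level. -/
def levelBound (t Δ : ℕ) : ℕ := (Δ + 1) ^ t * (Δ + 1) ^ (2 * t)

theorem one_le_levelBound (t Δ : ℕ) : 1 ≤ levelBound t Δ := by
  unfold levelBound
  exact Nat.succ_le_of_lt (by positivity)

namespace IsLayering

variable {x y z : V}

theorem exists_ancestor (hL : IsLayering G U ℓ) (hx : x ∈ U) {i : ℕ} (hi : i ≤ ℓ x) :
    ∃ z ∈ U, IsAncestor G U ℓ z x ∧ ℓ z = i := by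
  induction hi using Nat.decreasingInduction with
  | self => exact ⟨x, hx, .refl, rfl⟩
  | of_succ i _ ih =>
    obtain ⟨z, hz, hzx, hlevel⟩ := ih
    obtain ⟨y, hyz⟩ := hL.exists_parent z hz (by omega)
    obtain ⟨hy, -, -, hlevel'⟩ := id hyz
    exact ⟨y, hy, hzx.head hyz, by omega⟩

theorem exists_leg_to_root (hL : IsLayering G U ℓ) (hz : z ∈ U) (ht : t ≤ ℓ z) :
    ∃ c : ℕ → V, c 0 = z ∧ (∀ l ≤ t, c l ∈ U ∧ ℓ (c l) + l = ℓ z) ∧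
      ∀ l < t, G.Adj (c l) (c (l + 1)) := by
  induction t generalizing z with
  | zero => exact ⟨fun _ ↦ z, rfl, fun l hl ↦ ⟨hz, by grind⟩, fun l hl ↦ by omega⟩
  | succ t ih =>
    obtain ⟨y, hy, -, hyz, hlevel⟩ := hL.exists_parent z hz (by omega)
    obtain ⟨c, rfl, hc, hstep⟩ := ih hy (by omega)
    refine ⟨fun | 0 => z | l + 1 => c l, rfl, ?_, ?_⟩
    · rintro (_ | l) hl
      · exact ⟨hz, rfl⟩
      · obtain ⟨hcl, hlevel'⟩ := hc l (by omega)
        exact ⟨hcl, by grind⟩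
    · rintro (_ | l) hl
      · exact hyz.symm
      · exact hstep l (by omega)

theorem nonempty_subdividedClaw_embedding (hL : IsLayering G U ℓ) {a b c : ℕ → V}
    (hab : a 0 = b 0) (hac : a 0 = c 0)
    (ha : ∀ l ≤ t, a l ∈ U ∧ ℓ (a l) = ℓ (a 0) + l)
    (hb : ∀ l ≤ t, b l ∈ U ∧ ℓ (b l) = ℓ (a 0) + l)
    (hc : ∀ l ≤ t, c l ∈ U ∧ ℓ (c l) + l = ℓ (a 0))
    (ha_step : ∀ l < t, G.Adj (a l) (a (l + 1)))
    (hb_step : ∀ l < t, G.Adj (b l) (b (l + 1)))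
    (hc_step : ∀ l < t, G.Adj (c l) (c (l + 1)))
    (hab_ne : ∀ l ≤ t, a l = b l → l = 0)
    (hab_adj : ∀ l < t, G.Adj (a l) (b (l + 1)) → l = 0)
    (hba_adj : ∀ l < t, G.Adj (b l) (a (l + 1)) → l = 0) :
    Nonempty (subdividedClaw t ↪g G) := by
  apply nonempty_subdividedClaw_embedding_of_legs (p := ![a, b, c])
  · intro i
    fin_cases i
    exacts [rfl, hab.symm, hac.symm]
  · intro i
    fin_cases i
    exacts [ha_step, hb_step, hc_step]
  -- Levels decide all cases except those between the two ascending legs `a` and `b`.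
  · intro i i' l hl l' hl' heq
    have := ha l hl; have := hb l hl; have := hc l hl
    have := ha l' hl'; have := hb l' hl'; have := hc l' hl'
    fin_cases i <;> fin_cases i' <;>
      simp only [Fin.zero_eta, Fin.mk_one, Fin.reduceFinMk, Matrix.cons_val] at heq ⊢ <;>
      grind
  · intro i i' l hl l' hl' hadj hle
    have hlevel : ∀ x ∈ U, ∀ y ∈ U, G.Adj x y → ℓ x = ℓ y + 1 ∨ ℓ y = ℓ x + 1 := hL.level_of_adj
    have := ha l hl; have := hb l hl; have := hc l hl
    have := ha l' hl'; have := hb l' hl'; have := hc l' hl'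
    fin_cases i <;> fin_cases i' <;>
      simp only [Fin.zero_eta, Fin.mk_one, Fin.reduceFinMk, Matrix.cons_val] at hadj ⊢ <;>
      grind

theorem exists_higher_common_ancestor (hL : IsLayering G U ℓ)
    (hfree : IsEmpty (subdividedClaw t ↪g G)) (hx : x ∈ U) (hy : y ∈ U)
    (hzx : IsAncestor G U ℓ z x) (hzy : IsAncestor G U ℓ z y)
    (htz : t ≤ ℓ z) (hztx : ℓ z + t ≤ ℓ x) (hzty : ℓ z + t ≤ ℓ y) :
    ∃ w, IsAncestor G U ℓ w x ∧ IsAncestor G U ℓ w y ∧ ℓ z < ℓ w := by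
  by_contra! hmax
  obtain ⟨a, ha₀, ha, ha_step⟩ := hzx.exists_leg
  obtain ⟨b, hb₀, hb, hb_step⟩ := hzy.exists_leg
  obtain ⟨c, hc₀, hc, hc_step⟩ := hL.exists_leg_to_root (hzx.mem hx) htz
  have a_level (l) (hl : l ≤ t) : IsAncestor G U ℓ (a l) x ∧ ℓ (a l) = ℓ z + l :=
    ha l (by omega)
  have b_level (l) (hl : l ≤ t) : IsAncestor G U ℓ (b l) y ∧ ℓ (b l) = ℓ z + l :=
    hb l (by omega)
  have a_mem (l) (hl : l ≤ t) : a l ∈ U := (a_level l hl).1.mem hx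
  have b_mem (l) (hl : l ≤ t) : b l ∈ U := (b_level l hl).1.mem hy
  refine not_isEmpty_iff.mpr ?_ hfree
  refine hL.nonempty_subdividedClaw_embedding (ha₀.trans hb₀.symm) (ha₀.trans hc₀.symm)
    (fun l hl ↦ ⟨a_mem l hl, ha₀ ▸ (a_level l hl).2⟩)
    (fun l hl ↦ ⟨b_mem l hl, ha₀ ▸ (b_level l hl).2⟩) (ha₀ ▸ hc)
    (fun l hl ↦ ha_step l (by omega)) (fun l hl ↦ hb_step l (by omega)) hc_step ?_ ?_ ?_
  · intro l hl hab
    have := hmax (a l) (a_level l hl).1 (hab ▸ (b_level l hl).1)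
    have := (a_level l hl).2
    omega
  · intro l hl hab
    have ha_level := (a_level l hl.le).2
    have hb_level := (b_level (l + 1) hl).2
    have hparent : IsParent G U ℓ (a l) (b (l + 1)) :=
      ⟨a_mem l hl.le, b_mem (l + 1) hl, hab, by omega⟩
    have := hmax (a l) (a_level l hl.le).1 ((b_level (l + 1) hl).1.head hparent)
    omega
  · intro l hl hba
    have ha_level := (a_level (l + 1) hl).2
    have hb_level := (b_level l hl.le).2
    have hparent : IsParent G U ℓ (b l) (a (l + 1)) :=
      ⟨b_mem l hl.le, a_mem (l + 1) hl, hba, by omega⟩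
    have := hmax (b l) ((a_level (l + 1) hl).1.head hparent) (b_level l hl.le).1
    omega

theorem exists_near_common_ancestor (hL : IsLayering G U ℓ)
    (hfree : IsEmpty (subdividedClaw t ↪g G)) (hx : x ∈ U) (hy : y ∈ U) (hxy : ℓ x = ℓ y)
    (hzx : IsAncestor G U ℓ z x) (hzy : IsAncestor G U ℓ z y) (htz : t ≤ ℓ z) :
    ∃ w, IsAncestor G U ℓ w x ∧ IsAncestor G U ℓ w y ∧ ℓ x < ℓ w + t := by
  induction hk : ℓ x - ℓ z using Nat.strong_induction_on generalizing z with
  | _ k ih =>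
    by_cases hnear : ℓ x < ℓ z + t
    · exact ⟨z, hzx, hzy, hnear⟩
    · obtain ⟨w, hwx, hwy, hzw⟩ :=
        hL.exists_higher_common_ancestor hfree hx hy hzx hzy htz (by omega) (by omega)
      have := hwx.level_le
      exact ih _ (by omega) hwx hwy (by omega) rfl

variable [Fintype V]

theorem card_level_le_pow (hL : IsLayering G U ℓ) (hdeg : ∀ v, G.degree v ≤ Δ) (n : ℕ) :
    #{x ∈ U | ℓ x = n} ≤ (Δ + 1) ^ n := by
  obtain hempty | ⟨x, hx⟩ := {x ∈ U | ℓ x = n}.eq_empty_or_nonempty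
  · simp [hempty]
  have exists_walk_from_root {y} (hy : y ∈ U) (hyn : ℓ y = n) :
      ∃ r ∈ U, ℓ r = 0 ∧ ∃ p : G.Walk r y, p.length = n := by
    obtain ⟨r, hr, hry, hr₀⟩ := hL.exists_ancestor hy (Nat.zero_le _)
    obtain ⟨p, hp⟩ := hry.exists_walk
    exact ⟨r, hr, hr₀, p, by omega⟩
  rw [mem_filter] at hx
  obtain ⟨r, hr, hr₀, -⟩ := exists_walk_from_root hx.1 hx.2
  refine (card_le_card fun y hy ↦ ?_).trans (card_walkBall_le hdeg n r)
  rw [mem_filter] at hy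
  obtain ⟨r', hr', hr'₀, p, hp⟩ := exists_walk_from_root hy.1 hy.2
  obtain rfl := hL.root_unique r hr r' hr' hr₀ hr'₀
  exact mem_walkBall.mpr ⟨p, hp.le⟩

theorem card_descendants_le (hL : IsLayering G U ℓ) (hfree : IsEmpty (subdividedClaw t ↪g G))
    (hdeg : ∀ v, G.degree v ≤ Δ) (htz : t ≤ ℓ z) (n : ℕ) :
    #{x ∈ U | ℓ x = n ∧ IsAncestor G U ℓ z x} ≤ (Δ + 1) ^ (2 * t) := by
  obtain hempty | ⟨x, hx⟩ := {x ∈ U | ℓ x = n ∧ IsAncestor G U ℓ z x}.eq_empty_or_nonempty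
  · simp [hempty]
  refine (card_le_card fun y hy ↦ ?_).trans (card_walkBall_le hdeg (2 * t) x)
  obtain ⟨hxU, hxn, hzx⟩ := mem_filter.mp hx
  obtain ⟨hyU, hyn, hzy⟩ := mem_filter.mp hy
  obtain ⟨w, hwx, hwy, hw⟩ :=
    hL.exists_near_common_ancestor hfree hxU hyU (hxn.trans hyn.symm) hzx hzy htz
  obtain ⟨p, hp⟩ := hwx.exists_walk
  obtain ⟨q, hq⟩ := hwy.exists_walk
  refine mem_walkBall.mpr ⟨p.reverse.append q, ?_⟩
  rw [SimpleGraph.Walk.length_append, SimpleGraph.Walk.length_reverse]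
  omega

theorem card_level_le_levelBound (hL : IsLayering G U ℓ)
    (hfree : IsEmpty (subdividedClaw t ↪g G)) (hdeg : ∀ v, G.degree v ≤ Δ) (n : ℕ) :
    #{x ∈ U | ℓ x = n} ≤ levelBound t Δ := by
  rcases le_total n t with hn | hn
  · calc #{x ∈ U | ℓ x = n} ≤ (Δ + 1) ^ n := hL.card_level_le_pow hdeg n
      _ ≤ (Δ + 1) ^ t := Nat.pow_le_pow_right (by omega) hn
      _ ≤ levelBound t Δ := Nat.le_mul_of_pos_right _ (by positivity)
  · have hcover : {x ∈ U | ℓ x = n} ⊆ {z ∈ U | ℓ z = t}.biUnion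
        fun z ↦ {x ∈ U | ℓ x = n ∧ IsAncestor G U ℓ z x} := by
      intro x hx
      obtain ⟨hxU, hxn⟩ := mem_filter.mp hx
      obtain ⟨z, hz, hzx, hzt⟩ := hL.exists_ancestor hxU (hn.trans hxn.ge)
      exact mem_biUnion.mpr ⟨z, mem_filter.mpr ⟨hz, hzt⟩, mem_filter.mpr ⟨hxU, hxn, hzx⟩⟩
    calc #{x ∈ U | ℓ x = n} ≤ _ := card_le_card hcover
      _ ≤ #{z ∈ U | ℓ z = t} * (Δ + 1) ^ (2 * t) := card_biUnion_le_card_mul _ _ _ fun z hz ↦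
          hL.card_descendants_le hfree hdeg (mem_filter.mp hz).2.ge n
      _ ≤ levelBound t Δ := Nat.mul_le_mul_right _ (hL.card_level_le_pow hdeg t)

end IsLayering

end LayeredGraphs

section IndependencePolynomial

open Finset

variable {V : Type*} {G : SimpleGraph V} {W T A : Finset V}

/-- The neighbours of `T` inside `W`, i.e. the open neighbourhood of `T` in `W` when the two sets
are disjoint. -/
noncomputable def neighborsIn (G : SimpleGraph V) (W T : Finset V) : Finset V :=
  {w ∈ W | ∃ u ∈ T, G.Adj u w}

theorem mem_neighborsIn {w : V} : w ∈ neighborsIn G W T ↔ w ∈ W ∧ ∃ u ∈ T, G.Adj u w :=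
  mem_filter

theorem neighborsIn_subset : neighborsIn G W T ⊆ W :=
  filter_subset _ _

theorem neighborsIn_sdiff_union {U : Finset V} :
    neighborsIn G (W \ neighborsIn G W U) (U ∪ T) = neighborsIn G (W \ neighborsIn G W U) T := by
  ext w
  grind [mem_neighborsIn]

theorem isIndepSet_union_iff {S T : Finset V} :
    G.IsIndepSet ↑(S ∪ T) ↔
      G.IsIndepSet S ∧ G.IsIndepSet T ∧ ∀ u ∈ S, ∀ v ∈ T, ¬ G.Adj u v := by
  simp only [SimpleGraph.IsIndepSet, Set.Pairwise, mem_coe, mem_union]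
  grind [G.adj_comm, G.irrefl]

/-- The independent sets of the induced subgraph `G[W]`, which index the terms of its independence
polynomial. -/
noncomputable def indepSubsets (G : SimpleGraph V) (W : Finset V) : Finset (Finset V) :=
  W.powerset.filter fun S ↦ G.IsIndepSet (S : Set V)

theorem mem_indepSubsets {S : Finset V} : S ∈ indepSubsets G W ↔ S ⊆ W ∧ G.IsIndepSet ↑S := by
  rw [indepSubsets, mem_filter, mem_powerset]

theorem union_mem_indepSubsets_iff {Q : Finset V} (hA : A ⊆ W) (hT : T ∈ indepSubsets G A)
    (hQ : Disjoint Q A) :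
    T ∪ Q ∈ indepSubsets G W ↔ Q ∈ indepSubsets G ((W \ A) \ neighborsIn G (W \ A) T) := by
  rw [mem_indepSubsets] at hT
  have := disjoint_left.mp hQ
  simp only [mem_indepSubsets, isIndepSet_union_iff, subset_iff, mem_union, mem_sdiff,
    mem_neighborsIn]
  grind

variable [Fintype V] {lam : V → ℂ} {ε : ℝ}

theorem card_neighborsIn_le {Δ : ℕ} (hdeg : ∀ v, G.degree v ≤ Δ) :
    #(neighborsIn G W T) ≤ #T * Δ := by
  have hcover : neighborsIn G W T ⊆ T.biUnion fun u ↦ G.neighborFinset u := by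
    intro w hw
    simpa using (mem_neighborsIn.mp hw).2
  exact (card_le_card hcover).trans (card_biUnion_le_card_mul _ _ _ fun u _ ↦ hdeg u)

theorem indepPolyOn_eq_sum_indepSubsets (G : SimpleGraph V) (lam : V → ℂ) (W : Finset V) :
    indepPolyOn G lam W = ∑ S ∈ indepSubsets G W, ∏ v ∈ S, lam v := by
  have isIndepSet_iff (S : Finset V) : (∀ u ∈ S, ∀ v ∈ S, ¬ G.Adj u v) ↔ G.IsIndepSet ↑S :=
    ⟨fun h u hu v hv _ ↦ h u hu v hv, fun h u hu v hv huv ↦ h hu hv huv.ne huv⟩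
  simp only [indepPolyOn, indepSubsets, isIndepSet_iff, sum_filter]

theorem indepPolyOn_empty : indepPolyOn G lam ∅ = 1 := by
  simp [indepPolyOn]

theorem indepPolyOn_eq_sum_of_subset (hA : A ⊆ W) :
    indepPolyOn G lam W = ∑ T ∈ indepSubsets G A,
      (∏ v ∈ T, lam v) * indepPolyOn G lam ((W \ A) \ neighborsIn G (W \ A) T) := by
  have inter_mem {S} (hS : S ∈ indepSubsets G W) : S ∩ A ∈ indepSubsets G A :=
    mem_indepSubsets.mpr ⟨inter_subset_right,
      (mem_indepSubsets.mp hS).2.mono (coe_subset.mpr inter_subset_left)⟩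
  rw [indepPolyOn_eq_sum_indepSubsets, ← sum_fiberwise_of_maps_to (g := (· ∩ A)) fun _ ↦ inter_mem]
  refine sum_congr rfl fun T hT ↦ ?_
  rw [indepPolyOn_eq_sum_indepSubsets, mul_sum]
  have disjoint_of_mem {Q} (hQ : Q ∈ indepSubsets G ((W \ A) \ neighborsIn G (W \ A) T)) :
      Disjoint Q A :=
    disjoint_of_subset_left ((mem_indepSubsets.mp hQ).1.trans sdiff_subset) sdiff_disjoint
  have hTA : T ⊆ A := (mem_indepSubsets.mp hT).1
  refine sum_nbij' (· \ A) (T ∪ ·) ?_ ?_ ?_ ?_ ?_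
  · intro S hS
    obtain ⟨hS, rfl⟩ := mem_filter.mp hS
    rwa [← union_mem_indepSubsets_iff hA hT sdiff_disjoint, union_comm, sdiff_union_inter]
  · intro Q hQ
    refine mem_filter.mpr
      ⟨(union_mem_indepSubsets_iff hA hT (disjoint_of_mem hQ)).mpr hQ, ?_⟩
    rw [union_inter_distrib_right, inter_eq_left.mpr hTA,
      disjoint_iff_inter_eq_empty.mp (disjoint_of_mem hQ), union_empty]
  · intro S hS
    obtain ⟨-, rfl⟩ := mem_filter.mp hS
    rw [union_comm, sdiff_union_inter]
  · intro Q hQ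
    rw [union_sdiff_distrib, sdiff_eq_empty_iff_subset.mpr hTA, empty_union,
      sdiff_eq_self_of_disjoint (disjoint_of_mem hQ)]
  · intro S hS
    obtain ⟨-, rfl⟩ := mem_filter.mp hS
    exact (prod_inter_mul_prod_sdiff S A lam).symm

theorem norm_inv_sub_one_le_one {r : ℂ} (hr : 1 / 2 ≤ r.re) : ‖r⁻¹ - 1‖ ≤ 1 := by
  have hr₀ : r ≠ 0 := by
    rintro rfl
    norm_num at hr
  have hsub : ‖1 - r‖ ≤ ‖r‖ := by
    rw [← sq_le_sq₀ (norm_nonneg _) (norm_nonneg _), ← Complex.normSq_eq_norm_sq,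
      ← Complex.normSq_eq_norm_sq, Complex.normSq_apply, Complex.normSq_apply]
    simp only [Complex.sub_re, Complex.sub_im, Complex.one_re, Complex.one_im]
    nlinarith
  calc ‖r⁻¹ - 1‖ = ‖1 - r‖ / ‖r‖ := by rw [← norm_div, sub_div, div_self hr₀, one_div]
    _ ≤ 1 := div_le_one_of_le₀ hsub (norm_nonneg _)

theorem neg_le_re_div {μ r : ℂ} (hμ : ‖μ‖ ≤ μ.re + ε) (hr : 1 / 2 ≤ r.re) :
    -ε ≤ (μ / r).re := by
  have hbound : |(μ * (r⁻¹ - 1)).re| ≤ ‖μ‖ :=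
    calc |(μ * (r⁻¹ - 1)).re| ≤ ‖μ * (r⁻¹ - 1)‖ := Complex.abs_re_le_norm _
      _ = ‖μ‖ * ‖r⁻¹ - 1‖ := norm_mul _ _
      _ ≤ ‖μ‖ := mul_le_of_le_one_right (norm_nonneg _) (norm_inv_sub_one_le_one hr)
  have hsplit : (μ / r).re = μ.re + (μ * (r⁻¹ - 1)).re := by
    rw [← Complex.add_re]
    congr 1
    ring
  linarith [neg_le_of_abs_le hbound]

theorem one_sub_le_re_indepPolyOn_div (hA : A ⊆ W) (hZ : indepPolyOn G lam (W \ A) ≠ 0)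
    (hε : 0 ≤ ε)
    (hlam : ∀ T ⊆ A, G.IsIndepSet ↑T → ‖∏ v ∈ T, lam v‖ ≤ (∏ v ∈ T, lam v).re + ε)
    (hratio : ∀ T ⊆ A, T.Nonempty → G.IsIndepSet ↑T →
      1 / 2 ≤ (indepPolyOn G lam (W \ A) /
        indepPolyOn G lam ((W \ A) \ neighborsIn G (W \ A) T)).re) :
    1 - 2 ^ #A * ε ≤ (indepPolyOn G lam W / indepPolyOn G lam (W \ A)).re := by
  set Z := indepPolyOn G lam
  let term (T : Finset V) : ℂ :=
    (∏ v ∈ T, lam v) * Z ((W \ A) \ neighborsIn G (W \ A) T) / Z (W \ A)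
  have empty_mem : ∅ ∈ indepSubsets G A := by simp [mem_indepSubsets]
  have term_empty : term ∅ = 1 := by simp [term, neighborsIn, hZ]
  have expansion : Z W / Z (W \ A) = 1 + ∑ T ∈ (indepSubsets G A).erase ∅, term T := by
    rw [← term_empty, add_sum_erase _ _ empty_mem, ← sum_div,
      ← indepPolyOn_eq_sum_of_subset hA]
  have neg_le_term : ∀ T ∈ (indepSubsets G A).erase ∅, -ε ≤ (term T).re := by
    intro T hT
    obtain ⟨hT₀, hT⟩ := mem_erase.mp hT
    obtain ⟨hTA, hTind⟩ := mem_indepSubsets.mp hT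
    simpa only [term, div_div_eq_mul_div] using
      neg_le_re_div (hlam T hTA hTind) (hratio T hTA (nonempty_iff_ne_empty.mpr hT₀) hTind)
  have card_le : (#((indepSubsets G A).erase ∅) : ℝ) ≤ 2 ^ #A := by
    have : #((indepSubsets G A).erase ∅) ≤ #A.powerset :=
      card_le_card ((erase_subset _ _).trans (filter_subset _ _))
    rw [card_powerset] at this
    exact_mod_cast this
  have sum_bound : #((indepSubsets G A).erase ∅) • -ε ≤
      ∑ T ∈ (indepSubsets G A).erase ∅, (term T).re :=
    card_nsmul_le_sum _ _ _ neg_le_term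
  rw [nsmul_eq_mul] at sum_bound
  rw [expansion, Complex.add_re, Complex.one_re, Complex.re_sum]
  linarith [mul_le_mul_of_nonneg_right card_le hε]

end IndependencePolynomial

section Frontiers

open Finset

variable {V : Type*} {G : SimpleGraph V} {U W T : Finset V} {ℓ : V → ℕ} {n t Δ : ℕ}

/-- A stage of the exploration of `G`: `U` is the explored part, layered by `ℓ`, and `W` is an
unexplored set, attached to `U` only through level `n`. -/
structure IsFrontier (G : SimpleGraph V) (U W : Finset V) (ℓ : V → ℕ) (n : ℕ) : Prop where
  isLayering : IsLayering G U ℓ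
  disjoint : Disjoint U W
  level_eq_of_adj : ∀ x ∈ U, ∀ w ∈ W, G.Adj x w → ℓ x = n

theorem isFrontier_singleton {v : V} (hv : v ∉ W) : IsFrontier G {v} W (fun _ ↦ 0) 0 where
  isLayering :=
    { root_unique := by simp
      exists_parent := by simp
      level_of_adj := by simp }
  disjoint := by simpa using hv
  level_eq_of_adj := by simp

namespace IsFrontier

theorem isLayering_union (h : IsFrontier G U W ℓ n) (hT : T ⊆ neighborsIn G W U)
    (hTind : G.IsIndepSet ↑T) :
    IsLayering G (U ∪ T) (fun x ↦ if x ∈ T then n + 1 else ℓ x) := by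
  have hT' (x) (hx : x ∈ T) : x ∈ W ∧ ∃ u ∈ U, G.Adj u x ∧ ℓ u = n := by
    obtain ⟨hxW, u, hu, hux⟩ := mem_neighborsIn.mp (hT hx)
    exact ⟨hxW, u, hu, hux, h.level_eq_of_adj u hu x hxW hux⟩
  have notMem_of_mem (x) (hx : x ∈ U) : x ∉ T := fun hxT ↦
    disjoint_left.mp h.disjoint hx (hT' x hxT).1
  have level_of_adj_mem (u) (hu : u ∈ U) (x) (hx : x ∈ T) (hux : G.Adj u x) : ℓ u = n :=
    h.level_eq_of_adj u hu x (hT' x hx).1 hux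
  have not_adj (x) (hx : x ∈ T) (y) (hy : y ∈ T) : ¬ G.Adj x y := fun hxy ↦
    hTind hx hy hxy.ne hxy
  have hL := h.isLayering
  refine ⟨?_, ?_, ?_⟩
  · intro x hx y hy
    have := hL.root_unique x
    grind
  · intro x hx hx₀
    obtain hxU | hxT := mem_union.mp hx
    · obtain ⟨y, hy⟩ := hL.exists_parent x hxU (by grind)
      refine ⟨y, ?_⟩
      grind [IsParent]
    · obtain ⟨-, u, hu⟩ := hT' x hxT
      refine ⟨u, ?_⟩
      grind [IsParent]
  · intro x hx y hy hxy
    have := hL.level_of_adj x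
    grind [G.adj_comm]

theorem union (h : IsFrontier G U W ℓ n) (hT : T ⊆ neighborsIn G W U)
    (hTind : G.IsIndepSet ↑T) :
    IsFrontier G (U ∪ T) (W \ neighborsIn G W U) (fun x ↦ if x ∈ T then n + 1 else ℓ x) (n + 1)
    where
  isLayering := h.isLayering_union hT hTind
  disjoint := by
    have := disjoint_left.mp h.disjoint
    rw [disjoint_left]
    grind
  level_eq_of_adj := by
    intro x hx w hw
    grind [mem_neighborsIn]

variable [Fintype V]

theorem card_le_levelBound (h : IsFrontier G U W ℓ n) (hfree : IsEmpty (subdividedClaw t ↪g G))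
    (hdeg : ∀ v, G.degree v ≤ Δ) (hT : T ⊆ neighborsIn G W U) (hTind : G.IsIndepSet ↑T) :
    #T ≤ levelBound t Δ := by
  have hlevel : T ⊆ {x ∈ U ∪ T | (if x ∈ T then n + 1 else ℓ x) = n + 1} := by grind
  exact (card_le_card hlevel).trans
    ((h.isLayering_union hT hTind).card_level_le_levelBound hfree hdeg (n + 1))

theorem card_neighborsIn_le_levelBound_mul (h : IsFrontier G U W ℓ n)
    (hfree : IsEmpty (subdividedClaw t ↪g G)) (hdeg : ∀ v, G.degree v ≤ Δ) :
    #(neighborsIn G W U) ≤ levelBound t Δ * Δ := by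
  have hlevel : neighborsIn G W U ⊆ neighborsIn G W {x ∈ U | ℓ x = n} := by
    intro w hw
    obtain ⟨hwW, u, hu, huw⟩ := mem_neighborsIn.mp hw
    exact mem_neighborsIn.mpr
      ⟨hwW, u, mem_filter.mpr ⟨hu, h.level_eq_of_adj u hu w hwW huw⟩, huw⟩
  calc #(neighborsIn G W U) ≤ _ := card_le_card hlevel
    _ ≤ #{x ∈ U | ℓ x = n} * Δ := card_neighborsIn_le hdeg
    _ ≤ levelBound t Δ * Δ :=
        Nat.mul_le_mul_right _ (h.isLayering.card_level_le_levelBound hfree hdeg n)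

end IsFrontier

end Frontiers

section ZeroFreeness

open Finset

variable {V : Type*} [Fintype V] {G : SimpleGraph V} {lam : V → ℂ} {W A : Finset V} {m t Δ : ℕ}
  {ε : ℝ}

theorem half_le_re_indepPolyOn_div_of_isFrontier (hε : 2 ^ m * ε ≤ 1 / 2)
    (hlam : ∀ T : Finset V, #T ≤ levelBound t Δ → ‖∏ v ∈ T, lam v‖ ≤ (∏ v ∈ T, lam v).re + ε)
    (hA : A ⊆ W) (hAm : #A ≤ m) (hZ : indepPolyOn G lam (W \ A) ≠ 0)
    (hcard : ∀ T ⊆ A, G.IsIndepSet ↑T → #T ≤ levelBound t Δ)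
    (hfrontier : ∀ T ⊆ A, T.Nonempty → G.IsIndepSet ↑T →
      ∃ U ℓ n, IsFrontier G U (W \ A) ℓ n ∧ neighborsIn G (W \ A) U = neighborsIn G (W \ A) T)
    (hratio : ∀ U ℓ n, IsFrontier G U (W \ A) ℓ n → 1 / 2 ≤ (indepPolyOn G lam (W \ A) /
      indepPolyOn G lam ((W \ A) \ neighborsIn G (W \ A) U)).re) :
    1 / 2 ≤ (indepPolyOn G lam W / indepPolyOn G lam (W \ A)).re := by
  have hε₀ : 0 ≤ ε := by simpa using hlam ∅ (Nat.zero_le _)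
  have hpow : 2 ^ #A * ε ≤ 2 ^ m * ε := by gcongr; norm_num
  have := one_sub_le_re_indepPolyOn_div hA hZ hε₀
    (fun T hTA hTind ↦ hlam T (hcard T hTA hTind)) fun T hTA hT₀ hTind ↦ by
      obtain ⟨U, ℓ, n, hU, hUT⟩ := hfrontier T hTA hT₀ hTind
      exact hUT ▸ hratio U ℓ n hU
  linarith

theorem indepPolyOn_ne_zero_and_half_le_re_div (hfree : IsEmpty (subdividedClaw t ↪g G))
    (hdeg : ∀ v, G.degree v ≤ Δ) (hε : 2 ^ (levelBound t Δ * Δ + 1) * ε ≤ 1 / 2)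
    (hlam : ∀ T : Finset V, #T ≤ levelBound t Δ → ‖∏ v ∈ T, lam v‖ ≤ (∏ v ∈ T, lam v).re + ε)
    (W : Finset V) :
    indepPolyOn G lam W ≠ 0 ∧ ∀ U ℓ n, IsFrontier G U W ℓ n →
      1 / 2 ≤ (indepPolyOn G lam W / indepPolyOn G lam (W \ neighborsIn G W U)).re := by
  induction W using Finset.strongInduction with | _ W ih => ?_
  have ne_zero : indepPolyOn G lam W ≠ 0 := by
    obtain rfl | ⟨v, hv⟩ := W.eq_empty_or_nonempty
    · simp [indepPolyOn_empty]
    obtain ⟨hZ, hratio⟩ := ih (W \ {v}) (sdiff_ssubset (by simpa using hv) (singleton_nonempty v))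
    have half_le : 1 / 2 ≤ (indepPolyOn G lam W / indepPolyOn G lam (W \ {v})).re := by
      refine half_le_re_indepPolyOn_div_of_isFrontier hε hlam (by simpa using hv) (by simp) hZ
        (fun T hT _ ↦ (card_le_card hT).trans (one_le_levelBound t Δ)) (fun T hT hT₀ _ ↦ ?_) hratio
      obtain rfl := hT₀.subset_singleton_iff.mp hT
      exact ⟨{v}, _, 0, isFrontier_singleton (by simp), rfl⟩
    intro hW
    norm_num [hW] at half_le
  refine ⟨ne_zero, fun U ℓ n h ↦ ?_⟩
  have hA : neighborsIn G W U ⊆ W := neighborsIn_subset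
  obtain hempty | hA₀ := (neighborsIn G W U).eq_empty_or_nonempty
  · norm_num [hempty, ne_zero]
  obtain ⟨hZ, hratio⟩ := ih _ (sdiff_ssubset hA hA₀)
  exact half_le_re_indepPolyOn_div_of_isFrontier hε hlam hA
    ((h.card_neighborsIn_le_levelBound_mul hfree hdeg).trans (Nat.le_succ _)) hZ
    (fun T hT hTind ↦ h.card_le_levelBound hfree hdeg hT hTind)
    (fun T hT _ hTind ↦ ⟨U ∪ T, _, n + 1, h.union hT hTind, neighborsIn_sdiff_union⟩) hratio

/-- The points whose powers up to the `m`-th all lie in the parabolic region `‖w‖ < w.re + ε` around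
the ray `[0, ∞)`. This is the zero-free region, for suitable `m` and `ε`. -/
def powersNearRay (m : ℕ) (ε : ℝ) : Set ℂ :=
  {z | ∀ j ≤ m, ‖z ^ j‖ < (z ^ j).re + ε}

theorem isOpen_powersNearRay (m : ℕ) (ε : ℝ) : IsOpen (powersNearRay m ε) := by
  have : powersNearRay m ε = ⋂ j ∈ Set.Iic m, {z : ℂ | ‖z ^ j‖ < (z ^ j).re + ε} := by
    ext z
    simp [powersNearRay]
  rw [this]
  exact (Set.finite_Iic m).isOpen_biInter fun j _ ↦
    isOpen_lt (by fun_prop) (by fun_prop)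

theorem ofReal_mem_powersNearRay {x : ℝ} (hx : 0 ≤ x) (hε : 0 < ε) :
    (x : ℂ) ∈ powersNearRay m ε := by
  intro j _
  rw [← Complex.ofReal_pow, Complex.norm_real, Complex.ofReal_re,
    Real.norm_of_nonneg (by positivity)]
  linarith

theorem indepPoly_ne_zero_of_mem_powersNearRay (hfree : IsEmpty (subdividedClaw t ↪g G))
    (hdeg : ∀ v, G.degree v ≤ Δ) (hε : 2 ^ (levelBound t Δ * Δ + 1) * ε ≤ 1 / 2) {z : ℂ}
    (hz : z ∈ powersNearRay (levelBound t Δ) ε) : indepPoly G (fun _ ↦ z) ≠ 0 :=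
  (indepPolyOn_ne_zero_and_half_le_re_div hfree hdeg hε
    (fun T hT ↦ by simpa only [prod_const] using (hz #T hT).le) univ).1

end ZeroFreeness

/-- for all integers `t ≥ 1` and `Δ ≥ 3` there is an open set
`F ⊆ ℂ` containing the ray `[0,∞)` such that the univariate independence
polynomial of every finite `S_{t,t,t}`-free simple graph of maximum degree at
most `Δ` is nonzero at every `λ ∈ F`. -/
theorem stmt0 (t Δ : ℕ) (ht : 1 ≤ t) (hΔ : 3 ≤ Δ) :
    ∃ F : Set ℂ, IsOpen F ∧ (∀ x : ℝ, 0 ≤ x → (x : ℂ) ∈ F) ∧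
      ∀ (V : Type) [Fintype V] (G : SimpleGraph V),
        IsEmpty (subdividedClaw t ↪g G) →
        (∀ v : V, (G.neighborSet v).ncard ≤ Δ) →
        ∀ lam ∈ F, indepPoly G (fun _ => lam) ≠ 0 := by
  have hε : 2 ^ (levelBound t Δ * Δ + 1) * (1 / 2 ^ (levelBound t Δ * Δ + 2) : ℝ) ≤ 1 / 2 :=
    le_of_eq (by field_simp; ring)
  refine ⟨powersNearRay (levelBound t Δ) (1 / 2 ^ (levelBound t Δ * Δ + 2)),
    isOpen_powersNearRay _ _, fun x hx ↦ ofReal_mem_powersNearRay hx (by positivity), ?_⟩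
  intro V _ G hfree hdeg lam hlam
  have degree_le (v : V) : G.degree v ≤ Δ := by
    rw [← G.card_neighborSet_eq_degree, ← Nat.card_eq_fintype_card]
    exact hdeg v
  exact indepPoly_ne_zero_of_mem_powersNearRay hfree degree_le hε hlam
end

section
/- Let G = (V,E) be a finite simple graph and suppose there exist vertex subsets V₁, …, V_ℓ ⊆ V such that each induced subgraph G[V_i] is a clique, every edge of G is contained in some V_i, every vertex of G is contained in at most two of the sets V_i, and |V_i| ≤ k₀ for all i. Then for every assignment of weights λ = (λ_v)_{v∈V} with λ_v ∈ R(k₀²/4) for all v, the multivariate independence polynomial satisfies Z_{G,λ} ≠ 0. -/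
attribute [local instance] Classical.propDecidable

/-! The clique cover presents `G` as the line graph of a multigraph whose vertices are the
cliques, each vertex `v` of `G` becoming an edge `e v` between the at most two cliques containing
it. Independent sets of `G` are then matchings. Attach a variable `t j` to each clique `j` left
uncovered by a matching. The resulting polynomial is affine in each variable: shifting `t a` by
`z` and `t b` by `w` gives `A + B z + C w + D z w`, and adding an edge `v = {a, b}` replaces its
value `A` by `A + λ_v D`. If the shifted polynomial does not vanish for `Re z, Re w > -c`, then
neither root of its diagonal `A + (B + C) x + D x²` lies in that half-plane. The negated product
`-A / D` of two such roots avoids the parabolic region `parabR (1 / (4 c²))`, hence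
`A + λ_v D ≠ 0`. Each added edge costs `c` in the real parts of the variables at its ends, so
with all `t j = 1` and cliques of size at most `k₀` one can afford `c = 1 / k₀`.
-/

section ParabolicRegion

lemma mem_parabR_one_div_four_mul_sq {c : ℝ} {z : ℂ} :
    z ∈ parabR (1 / (4 * c ^ 2)) ↔ z.im ^ 2 < 4 * c ^ 2 * (z.re + c ^ 2) := by
  rcases eq_or_ne c 0 with rfl | hc
  · simp [parabR]
  · have hbound : z.re / (1 / (4 * c ^ 2)) + 1 / (4 * (1 / (4 * c ^ 2)) ^ 2) =
        4 * c ^ 2 * (z.re + c ^ 2) := by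
      field_simp
    simp only [parabR, Set.mem_ofPred_eq, hbound]

lemma neg_sq_lt_re_of_mem_parabR {c : ℝ} {z : ℂ} (hz : z ∈ parabR (1 / (4 * c ^ 2))) :
    -c ^ 2 < z.re := by
  rw [mem_parabR_one_div_four_mul_sq] at hz
  have hpos : 0 < 4 * c ^ 2 * (z.re + c ^ 2) := (sq_nonneg z.im).trans_lt hz
  linarith [pos_of_mul_pos_right hpos (by positivity)]

lemma ne_zero_of_mem_parabR {c : ℝ} {z : ℂ} (hz : z ∈ parabR (1 / (4 * c ^ 2))) : c ≠ 0 := by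
  rintro rfl
  rw [mem_parabR_one_div_four_mul_sq] at hz
  nlinarith [sq_nonneg z.im]

lemma neg_mul_notMem_parabR {c : ℝ} {z w : ℂ} (hc : 0 ≤ c) (hz : z.re ≤ -c) (hw : w.re ≤ -c) :
    -(z * w) ∉ parabR (1 / (4 * c ^ 2)) := by
  obtain ⟨x, y⟩ := z
  obtain ⟨u, v⟩ := w
  simp only [mem_parabR_one_div_four_mul_sq, Complex.neg_re, Complex.neg_im, Complex.mul_re,
    Complex.mul_im, not_lt, neg_sq] at hz hw ⊢
  have hxu : 0 ≤ x * u - c ^ 2 := by nlinarith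
  rcases le_total 0 (y * v) with hyv | hyv
  · calc 4 * c ^ 2 * (-(x * u - y * v) + c ^ 2)
        ≤ 4 * c ^ 2 * (-(x * u - y * v) + c ^ 2) + 4 * (y * v + c ^ 2) * (x * u - c ^ 2) := by
          have : 0 ≤ 4 * (y * v + c ^ 2) * (x * u - c ^ 2) := by positivity
          linarith
      _ = 4 * (x * v) * (y * u) := by ring
      _ ≤ (x * v + y * u) ^ 2 := four_mul_le_sq_add (x * v) (y * u)
  · have : 4 * c ^ 2 * (-(x * u - y * v) + c ^ 2) ≤ 0 :=
      mul_nonpos_of_nonneg_of_nonpos (by positivity) (by linarith)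
    exact this.trans (sq_nonneg _)

lemma add_mul_ne_zero_of_mem_parabR {A B C D l : ℂ} {c : ℝ} (hc : 0 ≤ c)
    (hstable : ∀ z w : ℂ, -c < z.re → -c < w.re → A + z * B + w * (C + z * D) ≠ 0)
    (hl : l ∈ parabR (1 / (4 * c ^ 2))) : A + l * D ≠ 0 := by
  have hcpos : 0 < c := hc.lt_of_ne' (ne_zero_of_mem_parabR hl)
  intro hA
  rcases eq_or_ne D 0 with rfl | hD
  · exact hstable 0 0 (by simpa) (by simpa) (by simpa using hA)
  have re_root_le {x : ℂ} (hx : D * (x * x) + (B + C) * x + A = 0) : x.re ≤ -c := by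
    by_contra! hlt
    exact hstable x x hlt hlt (by linear_combination hx)
  obtain ⟨x, hx⟩ := exists_quadratic_eq_zero (b := B + C) (c := A) hD
    (IsAlgClosed.exists_eq_mul_self _)
  set y := -(B + C) / D - x with hy
  have hsum : D * (x + y) = -(B + C) := by rw [hy]; field_simp; ring
  have hroot : D * (y * y) + (B + C) * y + A = 0 := by linear_combination hx + (y - x) * hsum
  have hprod : l = -(x * y) :=
    mul_left_cancel₀ hD (by linear_combination hA - hx + x * hsum)
  exact neg_mul_notMem_parabR hc (re_root_le hx) (re_root_le hroot) (hprod ▸ hl)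

end ParabolicRegion

section MatchingSum

variable {V J R : Type*} [CommSemiring R]

lemma prod_add_single_of_notMem {s : Finset J} {a : J} (ha : a ∉ s) (t : J → R) (z : R) :
    ∏ j ∈ s, (t + Pi.single a z : J → R) j = ∏ j ∈ s, t j :=
  Finset.prod_congr rfl fun j hj => by
    have hja : j ≠ a := ne_of_mem_of_not_mem hj ha
    simp [hja]

lemma prod_add_single_of_mem {s : Finset J} {a : J} (ha : a ∈ s) (t : J → R) (z : R) :
    ∏ j ∈ s, (t + Pi.single a z : J → R) j = ∏ j ∈ s, t j + z * ∏ j ∈ s.erase a, t j := by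
  rw [← Finset.mul_prod_erase s _ ha, ← Finset.mul_prod_erase s t ha,
    prod_add_single_of_notMem (Finset.notMem_erase a s), Pi.add_apply, Pi.single_eq_same, add_mul]

/-- The multivariate matching polynomial of the hypergraph with hyperedges `e v`, `v ∈ W`, on the
vertex set `U`: hyperedges of a matching carry the weights `lam`, uncovered vertices the weights
`t`. Two indices `u ≠ v` with `e u = e v = ∅` are allowed to occur together. -/
noncomputable def matchingSum (e : V → Finset J) (lam : V → R) (W : Finset V) (U : Finset J)
    (t : J → R) : R :=
  ∑ S ∈ W.powerset.filter fun S : Finset V => (S : Set V).PairwiseDisjoint e ∧ S.biUnion e ⊆ U,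
    (∏ v ∈ S, lam v) * ∏ j ∈ U \ S.biUnion e, t j

variable {e : V → Finset J} {lam : V → R} {W : Finset V} {U : Finset J}

lemma matchingSum_empty (t : J → R) : matchingSum e lam ∅ U t = ∏ j ∈ U, t j := by
  simp [matchingSum, Finset.filter_singleton]

lemma matchingSum_insert {v : V} (hv : v ∉ W) (he : e v ⊆ U) (t : J → R) :
    matchingSum e lam (insert v W) U t =
      matchingSum e lam W U t + lam v * matchingSum e lam W (U \ e v) t := by
  simp only [matchingSum, Finset.sum_filter]
  rw [Finset.sum_powerset_insert hv, Finset.mul_sum]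
  congr 1
  refine Finset.sum_congr rfl fun S hS => ?_
  have hvS : v ∉ S := fun h => hv (Finset.mem_powerset.1 hS h)
  have hmatching : ((insert v S : Finset V) : Set V).PairwiseDisjoint e ∧
      (insert v S).biUnion e ⊆ U ↔
      (S : Set V).PairwiseDisjoint e ∧ S.biUnion e ⊆ U \ e v := by
    rw [Finset.coe_insert, Set.pairwiseDisjoint_insert_of_notMem (Finset.mem_coe.not.2 hvS),
      Finset.biUnion_insert, Finset.union_subset_iff, Finset.subset_sdiff, disjoint_comm,
      Finset.disjoint_biUnion_right]
    simp only [Finset.mem_coe]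
    tauto
  simp only [hmatching]
  simp only [Finset.prod_insert hvS, Finset.biUnion_insert, sdiff_sdiff_left,
    Finset.sup_eq_union, mul_ite, mul_zero, mul_assoc]

lemma matchingSum_add_single {a : J} (ha : a ∈ U) (t : J → R) (z : R) :
    matchingSum e lam W U (t + Pi.single a z) =
      matchingSum e lam W U t + z * matchingSum e lam W (U.erase a) t := by
  simp only [matchingSum, Finset.sum_filter, Finset.mul_sum, ← Finset.sum_add_distrib]
  refine Finset.sum_congr rfl fun S _ => ?_
  by_cases haS : a ∈ S.biUnion e
  · rw [prod_add_single_of_notMem (fun h => (Finset.mem_sdiff.1 h).2 haS)]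
    simp [Finset.subset_erase, haS]
  · rw [prod_add_single_of_mem (Finset.mem_sdiff.2 ⟨ha, haS⟩)]
    simp only [Finset.subset_erase, haS, not_false_eq_true, and_true, Finset.erase_sdiff_comm]
    split_ifs
    · ring
    · simp

lemma matchingSum_add_single_add_single {a b : J} (ha : a ∈ U) (hb : b ∈ U) (hab : a ≠ b)
    (t : J → R) (z w : R) :
    matchingSum e lam W U (t + Pi.single a z + Pi.single b w) =
      matchingSum e lam W U t + z * matchingSum e lam W (U.erase a) t +
        w * (matchingSum e lam W (U.erase b) t +
          z * matchingSum e lam W (U \ {a, b}) t) := by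
  have hsdiff : (U.erase b).erase a = U \ {a, b} := by
    ext; simp; tauto
  rw [matchingSum_add_single hb, matchingSum_add_single ha,
    matchingSum_add_single (Finset.mem_erase.2 ⟨hab, ha⟩), hsdiff]

lemma indepPoly_eq_matchingSum [Fintype V] [Fintype J] {G : SimpleGraph V} {lam : V → ℂ}
    (hG : ∀ u v, G.Adj u v ↔ u ≠ v ∧ ¬ Disjoint (e u) (e v)) :
    indepPoly G lam = matchingSum e lam Finset.univ Finset.univ 1 := by
  have hindep (S : Finset V) :
      (∀ u ∈ S, ∀ v ∈ S, ¬ G.Adj u v) ↔ (S : Set V).PairwiseDisjoint e := by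
    simp only [hG, not_and_not_right]
    exact Iff.rfl
  simp [indepPoly, indepPolyOn, matchingSum, Finset.sum_filter, hindep]

end MatchingSum

section NonVanishing

variable {V J : Type*} {e : V → Finset J} {lam : V → ℂ} {W : Finset V} {U : Finset J}
  {t : J → ℂ} {c : ℝ} {v : V}

/-- The vertex weights `t` of the hypergraph with hyperedges `e v`, `v ∈ W`, have positive real part
on `U`, of size at least `c` times the degree. -/
def DominatesDegree (e : V → Finset J) (c : ℝ) (W : Finset V) (U : Finset J) (t : J → ℂ) : Prop :=
  ∀ j ∈ U, 0 < (t j).re ∧ c * (W.filter fun v => j ∈ e v).card ≤ (t j).re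

lemma DominatesDegree.add_of_insert (ht : DominatesDegree e c (insert v W) U t) (hc : 0 ≤ c)
    (hv : v ∉ W) {s : J → ℂ} (hs : ∀ j ∈ e v, -c < (s j).re) (hs₀ : ∀ j ∉ e v, s j = 0) :
    DominatesDegree e c W U (t + s) := by
  intro j hj
  obtain ⟨hpos, hdeg⟩ := ht j hj
  rw [Finset.filter_insert] at hdeg
  by_cases hjv : j ∈ e v
  · rw [if_pos hjv, Finset.card_insert_of_notMem (by simp [hv])] at hdeg
    push_cast at hdeg
    have hnonneg : 0 ≤ c * ((W.filter fun v => j ∈ e v).card : ℝ) := by positivity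
    have hsj := hs j hjv
    rw [Pi.add_apply, Complex.add_re]
    constructor <;> linarith
  · rw [if_neg hjv] at hdeg
    simpa [hs₀ j hjv] using ⟨hpos, hdeg⟩

lemma matchingSum_insert_ne_zero (hc₀ : 0 ≤ c) (hc₁ : c ≤ 1) (hv : v ∉ W) (he : e v ⊆ U)
    (hcard : (e v).card ≤ 2) (hlam : lam v ∈ parabR (1 / (4 * c ^ 2)))
    (hstable : ∀ s : J → ℂ, (∀ j ∈ e v, -c < (s j).re) → (∀ j ∉ e v, s j = 0) →
      matchingSum e lam W U (t + s) ≠ 0) :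
    matchingSum e lam (insert v W) U t ≠ 0 := by
  -- For an edge with a single end it suffices that its weight be an admissible shift.
  have hre : -c < (lam v).re := by nlinarith [neg_sq_lt_re_of_mem_parabR hlam]
  rw [matchingSum_insert hv he]
  obtain h | h | h : (e v).card = 0 ∨ (e v).card = 1 ∨ (e v).card = 2 := by lia
  · have hev : e v = ∅ := Finset.card_eq_zero.1 h
    have hsum : matchingSum e lam W U t ≠ 0 := by
      simpa using hstable 0 (by simp [hev]) (by simp)
    have hlam₁ : 1 + lam v ≠ 0 := fun h₀ => by
      have := congrArg Complex.re h₀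
      simp only [Complex.add_re, Complex.one_re, Complex.zero_re] at this
      linarith
    rw [hev, Finset.sdiff_empty, ← one_add_mul]
    exact mul_ne_zero hlam₁ hsum
  · obtain ⟨a, hev⟩ := Finset.card_eq_one.1 h
    have ha : a ∈ U := he (by simp [hev])
    rw [hev, Finset.sdiff_singleton_eq_erase, ← matchingSum_add_single ha]
    refine hstable _ (by simpa [hev] using hre) fun j hj => ?_
    rw [hev, Finset.mem_singleton] at hj
    simp [hj]
  · obtain ⟨a, b, hab, hev⟩ := Finset.card_eq_two.1 h
    have ha : a ∈ U := he (by simp [hev])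
    have hb : b ∈ U := he (by simp [hev])
    rw [hev]
    refine add_mul_ne_zero_of_mem_parabR (B := matchingSum e lam W (U.erase a) t)
      (C := matchingSum e lam W (U.erase b) t) hc₀ (fun z w hz hw => ?_) hlam
    rw [← matchingSum_add_single_add_single ha hb hab, add_assoc]
    refine hstable _ (by simp [hev, hab, hab.symm, hz, hw]) fun j hj => ?_
    simp only [hev, Finset.mem_insert, Finset.mem_singleton, not_or] at hj
    simp [hj.1, hj.2]

theorem matchingSum_ne_zero (hc₀ : 0 ≤ c) (hc₁ : c ≤ 1) (he : ∀ v ∈ W, e v ⊆ U)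
    (hcard : ∀ v ∈ W, (e v).card ≤ 2) (hlam : ∀ v ∈ W, lam v ∈ parabR (1 / (4 * c ^ 2)))
    (ht : DominatesDegree e c W U t) : matchingSum e lam W U t ≠ 0 := by
  induction W using Finset.induction_on generalizing t with
  | empty =>
    rw [matchingSum_empty, Finset.prod_ne_zero_iff]
    exact fun j hj h₀ => (ht j hj).1.ne' (by simp [h₀])
  | insert v W hv ih =>
    rw [Finset.forall_mem_insert] at he hcard hlam
    exact matchingSum_insert_ne_zero hc₀ hc₁ hv he.1 hcard.1 hlam.1 fun s hs hs₀ =>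
      ih he.2 hcard.2 hlam.2 (ht.add_of_insert hc₀ hv hs hs₀)

end NonVanishing

section CliqueCover

variable {V ι : Type*} [Fintype ι] {Vs : ι → Finset V}

/-- The edge of the underlying multigraph corresponding to the vertex `v`: the set of members of the
family `Vs` that contain `v`. -/
noncomputable def coverEdge (Vs : ι → Finset V) (v : V) : Finset ι :=
  Finset.univ.filter fun i => v ∈ Vs i

lemma mem_coverEdge {v : V} {i : ι} : i ∈ coverEdge Vs v ↔ v ∈ Vs i := by
  simp [coverEdge]

lemma adj_iff_not_disjoint_coverEdge {G : SimpleGraph V}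
    (hclique : ∀ i, G.IsClique (Vs i : Set V))
    (hedge : ∀ u v, G.Adj u v → ∃ i, u ∈ Vs i ∧ v ∈ Vs i) (u v : V) :
    G.Adj u v ↔ u ≠ v ∧ ¬ Disjoint (coverEdge Vs u) (coverEdge Vs v) := by
  simp only [Finset.not_disjoint_iff, mem_coverEdge]
  exact ⟨fun h => ⟨h.ne, hedge u v h⟩, fun ⟨hne, i, hu, hv⟩ => hclique i hu hv hne⟩

lemma dominatesDegree_coverEdge_one [Fintype V] {k : ℕ} (hsize : ∀ i, (Vs i).card ≤ k) :
    DominatesDegree (coverEdge Vs) (k : ℝ)⁻¹ Finset.univ Finset.univ 1 := by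
  intro i _
  have hdeg : (Finset.univ.filter fun v => i ∈ coverEdge Vs v) = Vs i := by
    ext v
    simp [mem_coverEdge]
  rw [hdeg, Pi.one_apply, Complex.one_re]
  refine ⟨one_pos, ?_⟩
  calc (k : ℝ)⁻¹ * (Vs i).card ≤ (k : ℝ)⁻¹ * k := by gcongr; exact hsize i
    _ ≤ 1 := inv_mul_le_one

theorem stmt3_general [Fintype V] (G : SimpleGraph V) (k₀ : ℕ) (Vs : ι → Finset V)
    (hclique : ∀ i, G.IsClique (Vs i : Set V))
    (hedge : ∀ u v : V, G.Adj u v → ∃ i, u ∈ Vs i ∧ v ∈ Vs i)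
    (htwo : ∀ v : V, (Finset.univ.filter fun i => v ∈ Vs i).card ≤ 2)
    (hsize : ∀ i, (Vs i).card ≤ k₀)
    (lam : V → ℂ) (hlam : ∀ v, lam v ∈ parabR ((k₀ : ℝ) ^ 2 / 4)) :
    indepPoly G lam ≠ 0 := by
  have hregion : (k₀ : ℝ) ^ 2 / 4 = 1 / (4 * ((k₀ : ℝ)⁻¹) ^ 2) := by
    rw [inv_pow, one_div, mul_inv, inv_inv, div_eq_inv_mul]
  rw [indepPoly_eq_matchingSum (adj_iff_not_disjoint_coverEdge hclique hedge)]
  exact matchingSum_ne_zero (inv_nonneg.2 k₀.cast_nonneg) k₀.cast_inv_le_one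
    (fun v _ => Finset.subset_univ _) (fun v _ => htwo v) (fun v _ => hregion ▸ hlam v)
    (dominatesDegree_coverEdge_one hsize)

end CliqueCover

/-- if `G` admits a clique cover `V₁, …, V_ℓ` (each `V_i` a
clique, every edge inside some `V_i`, every vertex in at most two `V_i`, and
`|V_i| ≤ k₀`), then the multivariate independence polynomial is nonzero
whenever all vertex weights lie in `R(k₀²/4)`. -/
theorem stmt3 {V : Type} [Fintype V] (G : SimpleGraph V) (k₀ ℓ : ℕ)
    (Vs : Fin ℓ → Finset V)
    (hclique : ∀ i, G.IsClique (↑(Vs i) : Set V))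
    (hedge : ∀ u v : V, G.Adj u v → ∃ i, u ∈ Vs i ∧ v ∈ Vs i)
    (htwo : ∀ v : V, (Finset.univ.filter (fun i : Fin ℓ => v ∈ Vs i)).card ≤ 2)
    (hsize : ∀ i, (Vs i).card ≤ k₀)
    (lam : V → ℂ) (hlam : ∀ v, lam v ∈ parabR ((k₀ : ℝ) ^ 2 / 4)) :
    indepPoly G lam ≠ 0 :=
  stmt3_general G k₀ Vs hclique hedge htwo hsize lam hlam
end

section
/- Let k ≥ 1 be an integer, let a₁, …, a_k ∈ R(k), and let z₁, …, z_k ∈ H(1/2). Then 1 + Σ_{j=1}^{k} a_j · z_j^{-1} ∈ H(1/2). -/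
attribute [local instance] Classical.propDecidable

/-!
The parabola bounding `R(k)` has its focus at `0`, so `a ∈ R(k)` says exactly that
`‖a‖ < Re a + 1 / (2k)`. Inversion maps `H(1/2)` into the closed disc of radius `1` centred at `1`,
so `Re (a / z) ≥ Re a - ‖a‖ > -1 / (2k)` for `z ∈ H(1/2)`. The `k` summands therefore lower the
real part of `1` by at most `1/2` in total.
-/

lemma norm_lt_re_add_iff {c : ℝ} (hc : 0 < c) (a : ℂ) :
    ‖a‖ < a.re + c ↔ a.im ^ 2 < 2 * c * a.re + c ^ 2 := by
  have norm_sq_eq : ‖a‖ ^ 2 = a.re ^ 2 + a.im ^ 2 := by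
    rw [Complex.sq_norm, Complex.normSq_apply, sq, sq]
  constructor
  · intro h
    nlinarith [norm_nonneg a]
  · intro h
    have re_add_nonneg : 0 ≤ a.re + c := by nlinarith [sq_nonneg a.im]
    refine lt_of_pow_lt_pow_left₀ 2 re_add_nonneg ?_
    linarith

lemma mem_parabR_iff_norm_lt {κ : ℝ} (hκ : 0 < κ) (a : ℂ) :
    a ∈ parabR κ ↔ ‖a‖ < a.re + 1 / (2 * κ) := by
  have rescale : a.re / κ + 1 / (4 * κ ^ 2) =
      2 * (1 / (2 * κ)) * a.re + (1 / (2 * κ)) ^ 2 := by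
    field_simp
    ring
  rw [norm_lt_re_add_iff (by positivity), ← rescale, parabR, Set.mem_ofPred_eq]

lemma norm_inv_sub_le_of_mem_halfH {t : ℝ} (ht : 0 < t) {z : ℂ} (hz : z ∈ halfH t) :
    ‖z⁻¹ - ((2 * t)⁻¹ : ℝ)‖ ≤ (2 * t)⁻¹ := by
  have re_ge : t ≤ z.re := hz
  have z_ne_zero : z ≠ 0 := by
    rintro rfl
    exact ht.not_ge re_ge
  have norm_sub_le : ‖((2 * t : ℝ) : ℂ) - z‖ ≤ ‖z‖ := by
    rw [← sq_le_sq₀ (norm_nonneg _) (norm_nonneg _), Complex.sq_norm, Complex.sq_norm,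
      Complex.normSq_apply, Complex.normSq_apply, Complex.sub_re, Complex.sub_im,
      Complex.ofReal_re, Complex.ofReal_im]
    nlinarith
  have two_mul_ne_zero : ((2 * t : ℝ) : ℂ) ≠ 0 := by
    exact_mod_cast (by positivity : 2 * t ≠ 0)
  calc ‖z⁻¹ - ((2 * t)⁻¹ : ℝ)‖
      = ‖((2 * t : ℝ) : ℂ) - z‖ / (‖z‖ * (2 * t)) := by
        rw [Complex.ofReal_inv, inv_sub_inv z_ne_zero two_mul_ne_zero, norm_div, norm_mul,
          Complex.norm_of_nonneg (by positivity)]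
    _ ≤ ‖z‖ / (‖z‖ * (2 * t)) := by gcongr
    _ = (2 * t)⁻¹ := by
        rw [div_mul_cancel_left₀ (norm_ne_zero_iff.mpr z_ne_zero)]

lemma re_sub_norm_div_le_re_mul_inv {t : ℝ} (ht : 0 < t) (a : ℂ) {z : ℂ} (hz : z ∈ halfH t) :
    (a.re - ‖a‖) / (2 * t) ≤ (a * z⁻¹).re := by
  set r : ℝ := (2 * t)⁻¹
  have norm_error_le : ‖a * (z⁻¹ - r)‖ ≤ ‖a‖ * r := by
    rw [norm_mul]
    gcongr
    exact norm_inv_sub_le_of_mem_halfH ht hz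
  calc (a.re - ‖a‖) / (2 * t)
      = a.re * r - ‖a‖ * r := by rw [div_eq_mul_inv, sub_mul]
    _ ≤ a.re * r + (a * (z⁻¹ - r)).re := by
        linarith [neg_le_of_abs_le (Complex.abs_re_le_norm (a * (z⁻¹ - r)))]
    _ = (a * z⁻¹).re := by
        rw [mul_sub, Complex.sub_re, Complex.re_mul_ofReal, add_sub_cancel]

lemma neg_lt_re_mul_inv_of_mem_parabR {κ : ℝ} (hκ : 0 < κ) {a z : ℂ} (ha : a ∈ parabR κ)
    (hz : z ∈ halfH (1 / 2)) : -(1 / (2 * κ)) < (a * z⁻¹).re := by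
  have norm_lt := (mem_parabR_iff_norm_lt hκ a).mp ha
  have re_ge := re_sub_norm_div_le_re_mul_inv one_half_pos a hz
  linarith

/-- if `a₁, …, a_k ∈ R(k)` and `z₁, …, z_k ∈ H(1/2)` then
`1 + Σ_j a_j · z_j⁻¹ ∈ H(1/2)`. -/
theorem stmt4 (k : ℕ) (hk : 1 ≤ k) (a z : Fin k → ℂ)
    (ha : ∀ j, a j ∈ parabR k) (hz : ∀ j, z j ∈ halfH (1 / 2)) :
    1 + ∑ j, a j * (z j)⁻¹ ∈ halfH (1 / 2) := by
  have k_pos : (0 : ℝ) < k := by exact_mod_cast hk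
  have sum_re_ge : -(1 / 2) ≤ ∑ j, (a j * (z j)⁻¹).re :=
    calc (-(1 / 2) : ℝ) = ∑ _j : Fin k, -(1 / (2 * (k : ℝ))) := by
          rw [Fin.sum_const, nsmul_eq_mul]
          field_simp
      _ ≤ ∑ j, (a j * (z j)⁻¹).re := Finset.sum_le_sum fun j _ ↦
          (neg_lt_re_mul_inv_of_mem_parabR k_pos (ha j) (hz j)).le
  rw [halfH, Set.mem_ofPred_eq, Complex.add_re, Complex.one_re, Complex.re_sum]
  linarith
end

section
/- Let t ≥ 1 and Δ ≥ 3 be integers and let G = (V,E) be a finite S_{t,t,t}-free simple graph of maximum degree at most Δ, with a fixed root vertex u ∈ V. Then for every admissible pair (L,U) with respect to (G,u), one has |L| ≤ 2·vol(Δ, 2t), where vol(Δ, t) = 1 + Δ·((Δ−1)^t − 1)/(Δ−2). -/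
attribute [local instance] Classical.propDecidable

/-- The boundary `∂X` of a set of vertices: the vertices outside `X` that have a
neighbour in `X`, with the special convention `∂∅ = {u}` for the root `u`. -/
noncomputable def bdry {V : Type*} [Fintype V] (G : SimpleGraph V) (u : V)
    (X : Finset V) : Finset V :=
  if X = ∅ then {u}
  else Finset.univ.filter (fun v => v ∉ X ∧ ∃ x ∈ X, G.Adj v x)

/-- Admissible pairs `(L, U)` with respect to a graph `G` and root vertex `u`. -/
inductive Admissible {V : Type*} [Fintype V] (G : SimpleGraph V) (u : V) :
    Finset V → Finset V → Prop
  | base : Admissible G u ∅ Finset.univ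
  | root : Admissible G u {u} (Finset.univ \ {u})
  | step (L' U' L : Finset V) :
      Admissible G u L' U' →
      L.Nonempty →
      L ⊆ bdry G u L' ∩ U' →
      (∀ a ∈ L, ∀ b ∈ L, ¬ G.Adj a b) →
      Admissible G u L (U' \ bdry G u L')

/-- `vol(Δ, t) = 1 + Δ·((Δ−1)^t − 1)/(Δ−2)`. -/
noncomputable def vol (Δ t : ℕ) : ℝ :=
  1 + (Δ : ℝ) * (((Δ : ℝ) - 1) ^ t - 1) / ((Δ : ℝ) - 2)

/-!
Let `x`, `y`, `z` be vertices of a connected graph `H`, and let `c` minimise the sum of the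
distances to them. Moving `c` along a geodesic towards `x` brings it closer to `x` and away from `z`
at most at the same rate, so it cannot bring it closer to `y`. Hence geodesics from `c` to `x`, `y`
and `z` meet only in `c`, and an edge between two of them can only join neighbours of `c`. In a
triangle-free graph the three geodesics therefore form an induced subdivided claw.

The sets `L` of an admissible pair are the layers of a layered graph rooted at `u`. If three
vertices of one layer are at pairwise distance greater than `2t`, we follow parents from each of
them down to the root and let `H` be induced on the vertices met. The top `t` layers of `H` are
three disjoint paths with no edges between them, so the minimiser `c` lies below them and all legs
of the claw have length at least `t`. In an `S_{t,t,t}`-free graph, `L` is therefore covered by two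
balls of radius `2t`.
-/

section Distance

variable {V W : Type*} {G : SimpleGraph V}

theorem exists_adj_edist_eq {c v : V} {r : ℕ} (h : G.edist c v = (r + 1 : ℕ)) :
    ∃ w, G.Adj v w ∧ G.edist c w = r := by
  rw [SimpleGraph.edist_comm] at h
  obtain ⟨p, hp⟩ := SimpleGraph.exists_walk_of_edist_eq_coe h
  cases p with
  | nil => simp at hp
  | @cons _ w _ hvw q =>
    refine ⟨w, hvw, le_antisymm ?_ ?_⟩
    · rw [SimpleGraph.edist_comm]
      refine (SimpleGraph.edist_le q).trans ?_
      simp only [SimpleGraph.Walk.length_cons, Nat.add_right_cancel_iff] at hp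
      exact_mod_cast hp.le
    · have htri := G.edist_triangle (u := v) (v := w) (w := c)
      rw [h, SimpleGraph.edist_eq_one_iff_adj.2 hvw, Nat.cast_add_one, add_comm (1 : ℕ∞)] at htri
      rw [SimpleGraph.edist_comm]
      exact (ENat.add_le_add_iff_right ENat.one_ne_top).1 htri

theorem exists_adj_dist_eq {c v : V} (h : G.dist v c ≠ 0) :
    ∃ w, G.Adj v w ∧ G.dist v c = G.dist w c + 1 := by
  obtain ⟨r, hr⟩ := Nat.exists_eq_succ_of_ne_zero h
  have hreach := SimpleGraph.Reachable.of_dist_ne_zero h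
  obtain ⟨w, hvw, hw⟩ := exists_adj_edist_eq (G := G) (c := c) (v := v) (r := r) <| by
    rw [SimpleGraph.edist_comm, ← hreach.coe_dist_eq_edist, hr]
  refine ⟨w, hvw, ?_⟩
  rw [hr, SimpleGraph.dist_comm, SimpleGraph.dist, hw, ENat.toNat_natCast]

theorem edist_map_le {H : SimpleGraph W} (f : H →g G) (a b : W) :
    G.edist (f a) (f b) ≤ H.edist a b := by
  by_cases h : H.Reachable a b
  · obtain ⟨p, hp⟩ := h.exists_walk_length_eq_edist
    simpa [← hp] using SimpleGraph.edist_le (p.map f)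
  · simp [SimpleGraph.edist_eq_top_of_not_reachable h]

end Distance

section MooreBound

variable {V : Type*} [Fintype V] {G : SimpleGraph V} {Δ : ℕ}

theorem card_sphere_succ_le (hdeg : ∀ v, G.degree v ≤ Δ) (c : V) (r : ℕ) :
    (Finset.univ.filter fun v => G.edist c v = (r + 1 : ℕ)).card ≤ Δ * (Δ - 1) ^ r := by
  induction r with
  | zero =>
    suffices h : (Finset.univ.filter fun v => G.edist c v = (0 + 1 : ℕ)) = G.neighborFinset c by
      rw [h, pow_zero, mul_one]
      exact hdeg c
    ext v
    simp
  | succ r ih =>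
    let sphere (n : ℕ) : Finset V := Finset.univ.filter fun v => G.edist c v = n
    have hcover : sphere (r + 2) ⊆
        (sphere (r + 1)).biUnion fun w => G.neighborFinset w \ sphere r := by
      intro v hv
      have hv' : G.edist c v = (r + 2 : ℕ) := by simpa [sphere] using hv
      obtain ⟨w, hvw, hw⟩ := exists_adj_edist_eq hv'
      have hvr : ((r + 2 : ℕ) : ℕ∞) ≠ r := by simp only [ne_eq, Nat.cast_inj]; omega
      simp only [Finset.mem_biUnion, Finset.mem_sdiff, SimpleGraph.mem_neighborFinset, sphere,
        Finset.mem_filter_univ, hv']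
      exact ⟨w, hw, hvw.symm, hvr⟩
    have hfiber : ∀ w ∈ sphere (r + 1), (G.neighborFinset w \ sphere r).card ≤ Δ - 1 := by
      intro w hw
      have hcw : G.edist c w = (r + 1 : ℕ) := by simpa [sphere] using hw
      obtain ⟨w', hww', hw'⟩ := exists_adj_edist_eq hcw
      have hlt : (G.neighborFinset w \ sphere r).card < G.degree w := by
        refine Finset.card_lt_card (Finset.ssubset_iff_of_subset Finset.sdiff_subset |>.2 ?_)
        exact ⟨w', by simpa using hww', by simp [sphere, hw']⟩
      exact Nat.le_sub_one_of_lt (hlt.trans_le (hdeg w))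
    calc (sphere (r + 2)).card
        ≤ (sphere (r + 1)).card * (Δ - 1) :=
          (Finset.card_le_card hcover).trans (Finset.card_biUnion_le_card_mul _ _ _ hfiber)
      _ ≤ Δ * (Δ - 1) ^ r * (Δ - 1) := Nat.mul_le_mul_right _ ih
      _ = Δ * (Δ - 1) ^ (r + 1) := by rw [pow_succ, mul_assoc]

theorem card_closedBall_le (hdeg : ∀ v, G.degree v ≤ Δ) (c : V) (r : ℕ) :
    (Finset.univ.filter fun v => G.edist c v ≤ r).card ≤
      1 + Δ * ∑ i ∈ Finset.range r, (Δ - 1) ^ i := by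
  induction r with
  | zero => simp [Finset.filter_eq]
  | succ r ih =>
    have hsplit : (Finset.univ.filter fun v => G.edist c v ≤ (r + 1 : ℕ)) =
        (Finset.univ.filter fun v => G.edist c v ≤ r) ∪
          Finset.univ.filter fun v => G.edist c v = (r + 1 : ℕ) := by
      ext v
      simp [le_iff_lt_or_eq (b := (r + 1 : ℕ∞)), ENat.lt_add_one_iff]
    rw [hsplit, Finset.sum_range_succ, mul_add, ← add_assoc]
    exact (Finset.card_union_le _ _).trans (add_le_add ih (card_sphere_succ_le hdeg c r))

end MooreBound

theorem vol_eq_cast_geom_sum {Δ : ℕ} (hΔ : 3 ≤ Δ) (r : ℕ) :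
    vol Δ r = ((1 + Δ * ∑ i ∈ Finset.range r, (Δ - 1) ^ i : ℕ) : ℝ) := by
  have hΔ' : (3 : ℝ) ≤ Δ := by exact_mod_cast hΔ
  have hgeom := geom_sum_eq (x := (Δ : ℝ) - 1) (by linarith) r
  rw [show (Δ : ℝ) - 1 - 1 = Δ - 2 by ring] at hgeom
  push_cast [Nat.cast_sub (show 1 ≤ Δ by omega)]
  rw [hgeom, vol, mul_div_assoc]

theorem exists_pairwise_not_of_mul_lt_card {α : Type*} {r : α → α → Prop} [Std.Symm r]
    {s : Finset α} {N : ℕ} (hN : ∀ a ∈ s, (s.filter (r a)).card ≤ N) {k : ℕ}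
    (hk : k * N < s.card) :
    ∃ x : Fin (k + 1) → α, (∀ i, x i ∈ s) ∧ Pairwise fun i j => ¬ r (x i) (x j) := by
  induction k with
  | zero =>
    obtain ⟨a, ha⟩ := Finset.card_pos.1 (by simpa using hk)
    exact ⟨fun _ => a, fun _ => ha, fun i j hij => absurd (Fin.ext (by omega)) hij⟩
  | succ k ih =>
    obtain ⟨x, hxs, hx⟩ := ih (lt_of_le_of_lt (Nat.mul_le_mul_right N k.le_succ) hk)
    obtain ⟨a, has, ha⟩ : ∃ a ∈ s, ∀ i, ¬ r (x i) a := by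
      by_contra! hcover
      have hsub : s ⊆ Finset.univ.biUnion fun i => s.filter (r (x i)) := fun a ha => by
        simpa [ha] using hcover a ha
      have hcard := (Finset.card_le_card hsub).trans
        (Finset.card_biUnion_le_card_mul _ _ N fun i _ => hN (x i) (hxs i))
      simp only [Finset.card_univ, Fintype.card_fin] at hcard
      omega
    refine ⟨Fin.cons a x, Fin.cases has hxs, fun i j => ?_⟩
    induction i using Fin.cases <;> induction j using Fin.cases
    · simp
    · exact fun _ h => ha _ (symm h)
    · exact fun _ => ha _
    · exact fun hij => hx (mt (congrArg Fin.succ) hij)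

/-- A map `f` along which the height `h` descends: it sends each vertex of positive height to a
neighbour whose height is one less, and fixes the vertices of height `0`. Taking `h` to be the
distance to a vertex, its orbits are geodesics; taking `h` to be the rank in a layered graph, they
run down to the root. -/
structure IsDescent {V : Type*} (G : SimpleGraph V) (h : V → ℕ) (f : V → V) : Prop where
  adj : ∀ v, h v ≠ 0 → G.Adj v (f v)
  height : ∀ v, h v ≠ 0 → h v = h (f v) + 1
  fixed : ∀ v, h v = 0 → f v = v

section Descent

variable {V : Type*} {G : SimpleGraph V} {h : V → ℕ} {f : V → V}

theorem exists_isDescent (hnext : ∀ v, h v ≠ 0 → ∃ w, G.Adj v w ∧ h v = h w + 1) :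
    ∃ f, IsDescent G h f := by
  have hstep : ∀ v, ∃ w, (h v ≠ 0 → G.Adj v w ∧ h v = h w + 1) ∧ (h v = 0 → w = v) := by
    intro v
    by_cases hv : h v = 0
    · exact ⟨v, fun hv' => absurd hv hv', fun _ => rfl⟩
    · obtain ⟨w, hw⟩ := hnext v hv
      exact ⟨w, fun _ => hw, fun hv' => absurd hv' hv⟩
  choose f hf hfix using hstep
  exact ⟨f, fun v hv => (hf v hv).1, fun v hv => (hf v hv).2, hfix⟩

namespace IsDescent

theorem height_iterate (hf : IsDescent G h f) (v : V) (d : ℕ) : h (f^[d] v) = h v - d := by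
  induction d with
  | zero => rfl
  | succ d ih =>
    rw [Function.iterate_succ_apply']
    by_cases hd : h (f^[d] v) = 0
    · rw [hf.fixed _ hd]
      omega
    · have := hf.height _ hd
      omega

theorem adj_iterate (hf : IsDescent G h f) {v : V} {d : ℕ} (hd : d < h v) :
    G.Adj (f^[d] v) (f^[d + 1] v) := by
  rw [Function.iterate_succ_apply']
  refine hf.adj _ ?_
  rw [hf.height_iterate]
  omega

theorem exists_walk_iterate (hf : IsDescent G h f) (v : V) (d : ℕ) :
    ∃ p : G.Walk v (f^[d] v), p.length ≤ d := by
  induction d with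
  | zero => exact ⟨.nil, le_rfl⟩
  | succ d ih =>
    obtain ⟨p, hp⟩ := ih
    rw [Function.iterate_succ_apply']
    by_cases hd : h (f^[d] v) = 0
    · rw [hf.fixed _ hd]
      exact ⟨p, hp.trans d.le_succ⟩
    · exact ⟨p.concat (hf.adj _ hd), by simpa using hp⟩

theorem dist_iterate_le (hf : IsDescent G h f) (v : V) (d : ℕ) : G.dist v (f^[d] v) ≤ d :=
  let ⟨p, hp⟩ := hf.exists_walk_iterate v d
  (SimpleGraph.dist_le p).trans hp

theorem restrict (hf : IsDescent G h f) {s : Set V} (hs : Set.MapsTo f s s) :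
    IsDescent (G.induce s) (fun v => h v) (hs.restrict f s s) where
  adj v hv := hf.adj v hv
  height v hv := hf.height v hv
  fixed v hv := Subtype.ext (hf.fixed v hv)

end IsDescent

end Descent

theorem adj_geodesic_iff {V : Type*} {G : SimpleGraph V} {t : ℕ} {c : V} {p : ℕ → V}
    (hadj : ∀ a < t, G.Adj (p a) (p (a + 1))) (hdist : ∀ a ≤ t, G.dist c (p a) = a) {a b : ℕ}
    (ha : a ≤ t) (hb : b ≤ t) : G.Adj (p a) (p b) ↔ a + 1 = b ∨ b + 1 = a := by
  refine ⟨fun h => ?_, ?_⟩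
  · have hne : a ≠ b := by
      rintro rfl
      exact h.ne rfl
    have hdiff := h.diff_dist_adj (u := c)
    rw [hdist a ha, hdist b hb] at hdiff
    omega
  · rintro (rfl | rfl)
    · exact hadj a hb
    · exact (hadj b ha).symm

theorem nonempty_subdividedClaw_embedding_of_legs_s5 {V : Type*} {G : SimpleGraph V} {t : ℕ} {c : V}
    {p : Fin 3 → ℕ → V} (hzero : ∀ i, p i 0 = c) (hadj : ∀ i, ∀ a < t, G.Adj (p i a) (p i (a + 1)))
    (hdist : ∀ i, ∀ a ≤ t, G.dist c (p i a) = a)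
    (hcross : ∀ i j, i ≠ j → ∀ a < t, ∀ b < t,
      p i (a + 1) ≠ p j (b + 1) ∧ ¬ G.Adj (p i (a + 1)) (p j (b + 1))) :
    Nonempty (subdividedClaw t ↪g G) := by
  have hleg : ∀ i, ∀ a ≤ t, ∀ b ≤ t, G.Adj (p i a) (p i b) ↔ a + 1 = b ∨ b + 1 = a :=
    fun i _ ha _ hb => adj_geodesic_iff (hadj i) (hdist i) ha hb
  have hinj : ∀ i, ∀ a ≤ t, ∀ b ≤ t, p i a = p i b → a = b := by
    intro i a ha b hb h
    rw [← hdist i a ha, h, hdist i b hb]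
  let f : Option (Fin 3 × Fin t) → V := fun o => o.elim c fun q => p q.1 (q.2 + 1)
  refine ⟨⟨⟨f, ?_⟩, ?_⟩⟩
  · rintro (_ | ⟨i, a⟩) (_ | ⟨j, b⟩) h
    · rfl
    · have := hinj j 0 t.zero_le (b + 1) b.2 ((hzero j).trans h)
      omega
    · have := hinj i (a + 1) a.2 0 t.zero_le (h.trans (hzero i).symm)
      omega
    · obtain rfl : i = j := by_contra fun hij => (hcross i j hij a a.2 b b.2).1 h
      have := hinj i (a + 1) a.2 (b + 1) b.2 h
      rw [Fin.ext (Nat.succ_injective this)]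
  · rintro (_ | ⟨i, a⟩) (_ | ⟨j, b⟩)
    · simp [subdividedClaw]
    · have := hleg j 0 t.zero_le (b + 1) b.2
      rw [hzero] at this
      change G.Adj c (p j (b + 1)) ↔ _
      simp [subdividedClaw, this]
    · have := hleg i (a + 1) a.2 0 t.zero_le
      rw [hzero] at this
      change G.Adj (p i (a + 1)) c ↔ _
      simp [subdividedClaw, this]
    · change G.Adj (p i (a + 1)) (p j (b + 1)) ↔ _
      by_cases hij : i = j
      · subst hij
        rw [hleg i (a + 1) a.2 (b + 1) b.2]
        simp only [subdividedClaw, SimpleGraph.fromRel_adj, ne_eq, Option.some.injEq,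
          Prod.mk.injEq, true_and, Fin.ext_iff]
        omega
      · simp [subdividedClaw, hij, Ne.symm hij, (hcross i j hij a a.2 b b.2).2]

theorem exists_sum_fin_three_eq {M : Type*} [AddCommMonoid M] {i j : Fin 3} (hij : i ≠ j) :
    ∃ l, i ≠ l ∧ ∀ F : Fin 3 → M, ∑ n, F n = F i + F j + F l := by
  obtain ⟨l, hil, hjl⟩ : ∃ l, i ≠ l ∧ j ≠ l := by decide +revert
  refine ⟨l, hil, fun F => ?_⟩
  rw [show Finset.univ = {i, j, l} by decide +revert, Finset.sum_insert (by simp [hij, hil]),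
    Finset.sum_pair hjl, add_assoc]

/-- `c` is a median of the vertices `x i`: it minimises the sum of the distances to them. -/
def IsMedian {V ι : Type*} [Fintype ι] (G : SimpleGraph V) (x : ι → V) (c : V) : Prop :=
  ∀ v, ∑ i, G.dist c (x i) ≤ ∑ i, G.dist v (x i)

theorem exists_isMedian {V ι : Type*} [Fintype ι] [Nonempty V] (G : SimpleGraph V) (x : ι → V) :
    ∃ c, IsMedian G x c :=
  ⟨_, fun v => Function.argmin_le (fun v => ∑ i, G.dist v (x i)) v⟩

namespace IsMedian

variable {V : Type*} {G : SimpleGraph V} {x : Fin 3 → V} {c : V}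

theorem dist_le_dist_of_geodesics (hc : IsMedian G x c) (hG : G.Connected) {i j : Fin 3}
    (hij : i ≠ j) {v w : V} (hv : G.dist c v + G.dist v (x i) = G.dist c (x i))
    (hw : G.dist c w + G.dist w (x j) = G.dist c (x j)) :
    G.dist c w ≤ G.dist v w := by
  obtain ⟨l, -, hsum⟩ := exists_sum_fin_three_eq (M := ℕ) hij
  have hmin := hc v
  rw [hsum, hsum] at hmin
  have hvj : G.dist v (x j) ≤ G.dist v w + G.dist w (x j) := hG.dist_triangle
  have hvl : G.dist v (x l) ≤ G.dist v c + G.dist c (x l) := hG.dist_triangle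
  rw [SimpleGraph.dist_comm (u := v) (v := c)] at hvl
  omega

theorem ne_and_not_adj_of_geodesics (hc : IsMedian G x c) (hG : G.Connected)
    (hfree : G.CliqueFree 3) {i j : Fin 3} (hij : i ≠ j) {v w : V}
    (hv : G.dist c v + G.dist v (x i) = G.dist c (x i))
    (hw : G.dist c w + G.dist w (x j) = G.dist c (x j)) (hcv : c ≠ v) (hcw : c ≠ w) :
    v ≠ w ∧ ¬ G.Adj v w := by
  have hle : G.dist c w ≤ G.dist v w := hc.dist_le_dist_of_geodesics hG hij hv hw
  have hle' : G.dist c v ≤ G.dist w v := hc.dist_le_dist_of_geodesics hG hij.symm hw hv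
  have hposv := hG.pos_dist_of_ne hcv
  have hposw := hG.pos_dist_of_ne hcw
  constructor
  · rintro rfl
    rw [SimpleGraph.dist_self] at hle
    omega
  · intro hvw
    rw [SimpleGraph.dist_eq_one_iff_adj.2 hvw] at hle
    rw [SimpleGraph.dist_eq_one_iff_adj.2 hvw.symm] at hle'
    have hcv' : G.Adj c v := SimpleGraph.dist_eq_one_iff_adj.1 (by omega)
    have hcw' : G.Adj c w := SimpleGraph.dist_eq_one_iff_adj.1 (by omega)
    exact hfree {c, v, w} (SimpleGraph.is3Clique_triple_iff.2 ⟨hcv', hcw', hvw⟩)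

theorem nonempty_subdividedClaw_embedding (hc : IsMedian G x c) (hG : G.Connected)
    (hfree : G.CliqueFree 3) {t : ℕ} (ht : ∀ i, t ≤ G.dist c (x i)) :
    Nonempty (subdividedClaw t ↪g G) := by
  have hdesc : ∀ i, ∃ f, IsDescent G (fun v => G.dist v (x i)) f := fun i =>
    exists_isDescent fun _ => exists_adj_dist_eq
  choose f hf using hdesc
  have hend : ∀ i a, G.dist ((f i)^[a] c) (x i) = G.dist c (x i) - a := fun i =>
    (hf i).height_iterate c
  have hdist : ∀ i, ∀ a ≤ t, G.dist c ((f i)^[a] c) = a := by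
    intro i a ha
    have htri : G.dist c (x i) ≤ G.dist c ((f i)^[a] c) + _ := hG.dist_triangle
    have := (hf i).dist_iterate_le c a
    have := hend i a
    have := ht i
    omega
  have hgeod : ∀ i, ∀ a ≤ t,
      G.dist c ((f i)^[a] c) + G.dist ((f i)^[a] c) (x i) = G.dist c (x i) := by
    intro i a ha
    have := ht i
    rw [hdist i a ha, hend i a]
    omega
  have hne : ∀ i, ∀ a < t, c ≠ (f i)^[a + 1] c := by
    intro i a ha h
    have := hdist i (a + 1) ha
    rw [← h, SimpleGraph.dist_self] at this
    omega
  refine nonempty_subdividedClaw_embedding_of_legs_s5 (p := fun i a => (f i)^[a] c) (fun _ => rfl)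
    (fun i a ha => (hf i).adj_iterate (ha.trans_le (ht i))) hdist fun i j hij a ha b hb => ?_
  exact hc.ne_and_not_adj_of_geodesics hG hfree hij (hgeod i _ ha) (hgeod j _ hb) (hne i a ha)
    (hne j b hb)

end IsMedian

/-- `ρ` makes `G` a layered graph with at most one root: edges join consecutive layers, every vertex
outside layer `0` has a parent in the previous layer, and layer `0` has at most one vertex. -/
structure IsLayering_s5 {V : Type*} (G : SimpleGraph V) (ρ : V → ℕ) : Prop where
  rank_adj : ∀ v w, G.Adj v w → ρ v = ρ w + 1 ∨ ρ w = ρ v + 1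
  exists_parent : ∀ v, ρ v ≠ 0 → ∃ w, G.Adj v w ∧ ρ v = ρ w + 1
  root_unique : ∀ v w, ρ v = 0 → ρ w = 0 → v = w

namespace IsLayering_s5

section

variable {V : Type*} {G : SimpleGraph V} {ρ : V → ℕ}

theorem cliqueFree_three (hρ : IsLayering_s5 G ρ) : G.CliqueFree 3 := by
  intro s hs
  obtain ⟨a, b, c, hab, hac, hbc, -⟩ := SimpleGraph.is3Clique_iff.1 hs
  have := hρ.rank_adj a b hab
  have := hρ.rank_adj a c hac
  have := hρ.rank_adj b c hbc
  omega

theorem iterate_rank_eq (hρ : IsLayering_s5 G ρ) {f : V → V} (hf : IsDescent G ρ f) (v w : V) :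
    f^[ρ v] v = f^[ρ w] w :=
  hρ.root_unique _ _ (by simp [hf.height_iterate]) (by simp [hf.height_iterate])

theorem preconnected (hρ : IsLayering_s5 G ρ) : G.Preconnected := by
  intro v w
  obtain ⟨f, hf⟩ := exists_isDescent hρ.exists_parent
  obtain ⟨p, -⟩ := hf.exists_walk_iterate v (ρ v)
  obtain ⟨q, -⟩ := hf.exists_walk_iterate w (ρ w)
  rw [hρ.iterate_rank_eq hf v w] at p
  exact ⟨p.append q.reverse⟩

theorem rank_le_rank_add_length (hρ : IsLayering_s5 G ρ) {v w : V} (p : G.Walk v w) :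
    ρ w ≤ ρ v + p.length := by
  induction p with
  | nil => simp
  | cons h p ih =>
    have := hρ.rank_adj _ _ h
    rw [SimpleGraph.Walk.length_cons]
    omega

theorem restrict (hρ : IsLayering_s5 G ρ) {f : V → V} (hf : IsDescent G ρ f) {s : Set V}
    (hs : Set.MapsTo f s s) : IsLayering_s5 (G.induce s) (fun v => ρ v) where
  rank_adj v w h := hρ.rank_adj v w h
  exists_parent v hv := ⟨⟨f v, hs v.2⟩, hf.adj v hv, hf.height v hv⟩
  root_unique v w hv hw := Subtype.ext (hρ.root_unique v w hv hw)

theorem induce_union {S L : Set V} [DecidablePred (· ∈ L)] {k : ℕ}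
    (hρ : IsLayering_s5 (G.induce S) (fun v => ρ v)) (hdisj : ∀ v ∈ L, v ∉ S)
    (hindep : ∀ v ∈ L, ∀ w ∈ L, ¬ G.Adj v w) (hparent : ∀ v ∈ L, ∃ w ∈ S, G.Adj v w)
    (hrank : ∀ v ∈ L, ∀ w ∈ S, G.Adj v w → ρ w = k) :
    IsLayering_s5 (G.induce (S ∪ L)) (fun v => if ↑v ∈ L then k + 1 else ρ v) where
  rank_adj := by
    rintro ⟨v, hv⟩ ⟨w, hw⟩ hvw
    have hvw : G.Adj v w := hvw
    have hwv : G.Adj w v := hvw.symm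
    have hold : v ∈ S → w ∈ S → ρ v = ρ w + 1 ∨ ρ w = ρ v + 1 := fun hv hw =>
      hρ.rank_adj ⟨v, hv⟩ ⟨w, hw⟩ hvw
    grind
  exists_parent := by
    rintro ⟨v, hv⟩ hv0
    by_cases hvL : v ∈ L
    · obtain ⟨w, hwS, hvw⟩ := hparent v hvL
      have hwL : w ∉ L := fun h => hdisj w h hwS
      exact ⟨⟨w, Or.inl hwS⟩, hvw, by simp [hvL, hwL, hrank v hvL w hwS hvw]⟩
    · obtain ⟨⟨w, hwS⟩, hvw, hw⟩ :=
        hρ.exists_parent ⟨v, hv.resolve_right hvL⟩ (by simpa [hvL] using hv0)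
      have hwL : w ∉ L := fun h => hdisj w h hwS
      exact ⟨⟨w, Or.inl hwS⟩, hvw, by simpa [hvL, hwL] using hw⟩
  root_unique := by
    rintro ⟨v, hv⟩ ⟨w, hw⟩ hv0 hw0
    have hvL : v ∉ L := fun h => by simp [h] at hv0
    have hwL : w ∉ L := fun h => by simp [h] at hw0
    simp only [hvL, hwL, if_false] at hv0 hw0
    have hvw := hρ.root_unique ⟨v, hv.resolve_right hvL⟩ ⟨w, hw.resolve_right hwL⟩ hv0 hw0
    exact Subtype.ext (Subtype.mk.inj hvw)

end

section Threads

variable {V : Type*} {G : SimpleGraph V} {ρ : V → ℕ} {f : V → V} {k t : ℕ}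

theorem lt_rank_of_two_mul_lt_dist (hρ : IsLayering_s5 G ρ) (hf : IsDescent G ρ f) {v w : V}
    (hv : ρ v = k) (hw : ρ w = k) (hfar : 2 * t < G.dist v w) : t < k := by
  have hroot : f^[k] w = f^[k] v := by simpa [hv, hw] using hρ.iterate_rank_eq hf w v
  obtain ⟨p, hp⟩ := hf.exists_walk_iterate v k
  obtain ⟨q, hq⟩ := hf.exists_walk_iterate w k
  have hshort := SimpleGraph.dist_le (p.append (q.copy rfl hroot).reverse)
  simp only [SimpleGraph.Walk.length_append, SimpleGraph.Walk.length_copy,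
    SimpleGraph.Walk.length_reverse] at hshort
  omega

theorem eq_iterate_of_adj_iterate {ι : Type*} {x : ι → V} (hρ : IsLayering_s5 G ρ)
    (hf : IsDescent G ρ f) (hx : ∀ i, ρ (x i) = k) (htk : t < k)
    (hfar : Pairwise fun i j => 2 * t < G.dist (x i) (x j))
    (hcover : ∀ v, ∃ i d, f^[d] (x i) = v) {i : ι} {d : ℕ} (hd : d < t) {w : V}
    (hw : G.Adj (f^[d] (x i)) w) :
    w = f^[d + 1] (x i) ∨ ∃ e, d = e + 1 ∧ w = f^[e] (x i) := by
  obtain ⟨j, e, rfl⟩ := hcover w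
  have hrank := hρ.rank_adj _ _ hw
  rw [hf.height_iterate, hf.height_iterate, hx, hx] at hrank
  have hde : e = d + 1 ∨ d = e + 1 := by omega
  obtain rfl : i = j := by
    by_contra hij
    have hfar := hfar hij
    obtain ⟨p, hp⟩ := hf.exists_walk_iterate (x i) d
    obtain ⟨q, hq⟩ := hf.exists_walk_iterate (x j) e
    have hshort := SimpleGraph.dist_le ((p.concat hw).append q.reverse)
    simp only [SimpleGraph.Walk.length_append, SimpleGraph.Walk.length_concat,
      SimpleGraph.Walk.length_reverse] at hshort
    omega
  exact hde.imp (fun h => by rw [h]) fun h => ⟨e, h, rfl⟩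

theorem dist_iterate_succ_lt {ι : Type*} {x : ι → V} (hρ : IsLayering_s5 G ρ)
    (hf : IsDescent G ρ f) (hx : ∀ i, ρ (x i) = k) (htk : t < k)
    (hfar : Pairwise fun i j => 2 * t < G.dist (x i) (x j))
    (hcover : ∀ v, ∃ i d, f^[d] (x i) = v) {i j : ι} (hij : i ≠ j) {d : ℕ} (hd : d < t) :
    G.dist (f^[d + 1] (x i)) (x j) < G.dist (f^[d] (x i)) (x j) := by
  have hne : G.dist (f^[d] (x i)) (x j) ≠ 0 := by
    have := hfar hij
    have htri := (hρ.preconnected (x i) (f^[d] (x i))).dist_triangle_left (x j)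
    have := hf.dist_iterate_le (x i) d
    omega
  obtain ⟨w, hw, hdist⟩ := exists_adj_dist_eq hne
  obtain rfl | ⟨e, rfl, rfl⟩ := hρ.eq_iterate_of_adj_iterate hf hx htk hfar hcover hd hw
  · omega
  · have := hρ.dist_iterate_succ_lt hf hx htk hfar hcover hij (e.lt_succ_self.trans hd)
    omega

theorem not_isMedian_iterate {x : Fin 3 → V} (hρ : IsLayering_s5 G ρ) (hf : IsDescent G ρ f)
    (hx : ∀ i, ρ (x i) = k) (htk : t < k)
    (hfar : Pairwise fun i j => 2 * t < G.dist (x i) (x j))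
    (hcover : ∀ v, ∃ i d, f^[d] (x i) = v) (i : Fin 3) {d : ℕ} (hd : d < t) :
    ¬ IsMedian G x (f^[d] (x i)) := by
  intro hmed
  have hadj : G.Adj (f^[d] (x i)) (f^[d + 1] (x i)) :=
    hf.adj_iterate (by rw [hx]; exact hd.trans htk)
  have haway : G.dist (f^[d + 1] (x i)) (x i) ≤ G.dist (f^[d] (x i)) (x i) + 1 := by
    have := hadj.symm.reachable.dist_triangle_left (x i)
    rw [SimpleGraph.dist_eq_one_iff_adj.2 hadj.symm] at this
    omega
  have hcloser : ∀ j, i ≠ j → G.dist (f^[d + 1] (x i)) (x j) < G.dist (f^[d] (x i)) (x j) :=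
    fun j hij => hρ.dist_iterate_succ_lt hf hx htk hfar hcover hij hd
  obtain ⟨j, hij⟩ : ∃ j, i ≠ j := (exists_ne i).imp fun _ => Ne.symm
  obtain ⟨l, hil, hsum⟩ := exists_sum_fin_three_eq (M := ℕ) hij
  have hmin := hmed (f^[d + 1] (x i))
  rw [hsum, hsum] at hmin
  have := hcloser j hij
  have := hcloser l hil
  omega

theorem nonempty_subdividedClaw_embedding_of_cover {x : Fin 3 → V} (hρ : IsLayering_s5 G ρ)
    (hf : IsDescent G ρ f) (hx : ∀ i, ρ (x i) = k)
    (hfar : Pairwise fun i j => 2 * t < G.dist (x i) (x j))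
    (hcover : ∀ v, ∃ i d, f^[d] (x i) = v) : Nonempty (subdividedClaw t ↪g G) := by
  have htk : t < k := hρ.lt_rank_of_two_mul_lt_dist hf (hx 0) (hx 1) (hfar (by decide))
  have : Nonempty V := ⟨x 0⟩
  obtain ⟨c, hc⟩ := exists_isMedian G x
  obtain ⟨j, e, rfl⟩ := hcover c
  have hte : t ≤ e := by
    by_contra! het
    exact hρ.not_isMedian_iterate hf hx htk hfar hcover j het hc
  refine hc.nonempty_subdividedClaw_embedding ⟨hρ.preconnected⟩ hρ.cliqueFree_three fun i => ?_
  obtain ⟨p, hp⟩ := (hρ.preconnected (f^[e] (x j)) (x i)).exists_walk_length_eq_dist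
  have := hρ.rank_le_rank_add_length p
  rw [hf.height_iterate, hx, hx] at this
  omega

theorem nonempty_subdividedClaw_embedding_s5 {x : Fin 3 → V} (hρ : IsLayering_s5 G ρ)
    (hx : ∀ i, ρ (x i) = k)
    (hfar : Pairwise fun i j => ((2 * t : ℕ) : ℕ∞) < G.edist (x i) (x j)) :
    Nonempty (subdividedClaw t ↪g G) := by
  obtain ⟨f, hf⟩ := exists_isDescent hρ.exists_parent
  let s : Set V := {v | ∃ i d, f^[d] (x i) = v}
  have hs : Set.MapsTo f s s := by
    rintro _ ⟨i, d, rfl⟩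
    exact ⟨i, d + 1, Function.iterate_succ_apply' f d (x i)⟩
  have hlayering := hρ.restrict hf hs
  refine (hlayering.nonempty_subdividedClaw_embedding_of_cover (k := k) (t := t)
    (x := fun i => ⟨x i, i, 0, rfl⟩) (hf.restrict hs) hx ?_ ?_).map
      (SimpleGraph.Embedding.induce s).comp
  · intro i j hij
    have h := (hfar hij).trans_le <| edist_map_le
      (SimpleGraph.Embedding.induce (G := G) s).toHom ⟨x i, i, 0, rfl⟩ ⟨x j, j, 0, rfl⟩
    rw [← (hlayering.preconnected _ _).coe_dist_eq_edist] at h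
    exact_mod_cast h
  · rintro ⟨_, i, d, rfl⟩
    refine ⟨i, d, Subtype.ext ?_⟩
    rw [hs.iterate_restrict, Set.MapsTo.val_restrict_apply]

end Threads

end IsLayering_s5

/-- An exploration of `G` that has reached the vertex set `S`, layered by `ρ`: `L` is contained in
the layer of rank `k`, and the vertices of `U` are unexplored and are joined to `S` only through
`L`. For a nonempty `L` these are the properties of an admissible pair `(L, U)` that matter. -/
structure IsExploration {V : Type*} (G : SimpleGraph V) (L U : Finset V) (S : Set V) (ρ : V → ℕ)
    (k : ℕ) : Prop where
  nonempty : L.Nonempty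
  layering : IsLayering_s5 (G.induce S) (fun v => ρ v)
  mem_of_front : ∀ v ∈ L, v ∈ S
  rank_of_front : ∀ v ∈ L, ρ v = k
  notMem : ∀ v ∈ U, v ∉ S
  front_of_adj : ∀ v ∈ U, ∀ w ∈ S, G.Adj v w → w ∈ L

section Exploration

variable {V : Type*} [Fintype V] {G : SimpleGraph V} {u : V} {L U : Finset V}

theorem mem_bdry_iff {v : V} (hL : L.Nonempty) :
    v ∈ bdry G u L ↔ v ∉ L ∧ ∃ w ∈ L, G.Adj v w := by
  simp [bdry, hL.ne_empty]

theorem isExploration_singleton (G : SimpleGraph V) (u : V) :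
    IsExploration G {u} (Finset.univ \ {u}) {u} (fun _ => 0) 0 where
  nonempty := Finset.singleton_nonempty u
  layering :=
    { rank_adj := fun v w h => absurd (Subsingleton.elim v w) h.ne
      exists_parent := fun _ h => absurd rfl h
      root_unique := fun v w _ _ => Subsingleton.elim v w }
  mem_of_front := by simp
  rank_of_front := by simp
  notMem := by simp
  front_of_adj := by simp

theorem IsExploration.step {L' U' : Finset V} {S : Set V} {ρ : V → ℕ} {k : ℕ}
    (h : IsExploration G L' U' S ρ k) (hL : L.Nonempty) (hsub : L ⊆ bdry G u L' ∩ U')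
    (hindep : ∀ a ∈ L, ∀ b ∈ L, ¬ G.Adj a b) :
    IsExploration G L (U' \ bdry G u L') (S ∪ L)
      (fun v => if v ∈ (L : Set V) then k + 1 else ρ v) (k + 1) := by
  have hbdry : ∀ v ∈ L, v ∈ bdry G u L' := fun v hv => (Finset.mem_inter.1 (hsub hv)).1
  have hU' : ∀ v ∈ L, v ∈ U' := fun v hv => (Finset.mem_inter.1 (hsub hv)).2
  refine ⟨hL, ?_, fun v hv => Or.inr hv, fun v hv => if_pos hv, ?_, ?_⟩
  · refine h.layering.induce_union (fun v hv => h.notMem v (hU' v hv)) hindep (fun v hv => ?_)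
      fun v hv w hw hvw => h.rank_of_front w (h.front_of_adj v (hU' v hv) w hw hvw)
    obtain ⟨-, w, hw, hvw⟩ := (mem_bdry_iff h.nonempty).1 (hbdry v hv)
    exact ⟨w, h.mem_of_front w hw, hvw⟩
  · rintro v hv (hvS | hvL)
    · exact h.notMem v (Finset.mem_sdiff.1 hv).1 hvS
    · exact (Finset.mem_sdiff.1 hv).2 (hbdry v hvL)
  · rintro v hv w (hwS | hwL) hvw
    · obtain ⟨hvU', hvb⟩ := Finset.mem_sdiff.1 hv
      have hvL' : v ∉ L' := fun hvL' => h.notMem v hvU' (h.mem_of_front v hvL')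
      have hwL' : w ∈ L' := h.front_of_adj v hvU' w hwS hvw
      exact absurd ((mem_bdry_iff h.nonempty).2 ⟨hvL', w, hwL', hvw⟩) hvb
    · exact hwL

theorem Admissible.exists_isExploration (h : Admissible G u L U) :
    (L = ∅ ∧ U = Finset.univ) ∨ ∃ S ρ k, IsExploration G L U S ρ k := by
  induction h with
  | base => exact Or.inl ⟨rfl, rfl⟩
  | root => exact Or.inr ⟨_, _, _, isExploration_singleton G u⟩
  | step L' U' L _ hL hsub hindep ih =>
    right
    obtain ⟨rfl, rfl⟩ | ⟨S, ρ, k, hE⟩ := ih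
    · have hbdry : bdry G u ∅ = {u} := if_pos rfl
      rw [hbdry, Finset.inter_univ] at hsub
      obtain rfl := (Finset.subset_singleton_iff.1 hsub).resolve_left hL.ne_empty
      rw [hbdry]
      exact ⟨_, _, _, isExploration_singleton G u⟩
    · exact ⟨_, _, _, hE.step hL hsub hindep⟩

theorem Admissible.nonempty_subdividedClaw_embedding_s5 {t : ℕ} {x : Fin 3 → V}
    (h : Admissible G u L U) (hx : ∀ i, x i ∈ L)
    (hfar : Pairwise fun i j => ((2 * t : ℕ) : ℕ∞) < G.edist (x i) (x j)) :
    Nonempty (subdividedClaw t ↪g G) := by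
  obtain ⟨rfl, -⟩ | ⟨S, ρ, k, hE⟩ := h.exists_isExploration
  · exact absurd (hx 0) (Finset.notMem_empty _)
  · let e : G.induce S ↪g G := SimpleGraph.Embedding.induce S
    obtain ⟨f⟩ := hE.layering.nonempty_subdividedClaw_embedding_s5 (k := k)
      (x := fun i => ⟨x i, hE.mem_of_front _ (hx i)⟩) (fun i => hE.rank_of_front _ (hx i))
      fun i j hij => (hfar hij).trans_le (edist_map_le e.toHom _ _)
    exact ⟨e.comp f⟩

theorem Admissible.card_le {t Δ : ℕ} (h : Admissible G u L U)
    (hfree : IsEmpty (subdividedClaw t ↪g G)) (hdeg : ∀ v, G.degree v ≤ Δ) :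
    L.card ≤ 2 * (1 + Δ * ∑ i ∈ Finset.range (2 * t), (Δ - 1) ^ i) := by
  have hball : ∀ v ∈ L, (L.filter fun w => G.edist v w ≤ (2 * t : ℕ)).card ≤
      1 + Δ * ∑ i ∈ Finset.range (2 * t), (Δ - 1) ^ i := fun v _ =>
    (Finset.card_le_card (Finset.filter_subset_filter _ L.subset_univ)).trans
      (card_closedBall_le hdeg v (2 * t))
  have : Std.Symm fun v w => G.edist v w ≤ (2 * t : ℕ) :=
    ⟨fun v w hvw => SimpleGraph.edist_comm (u := v) (v := w) ▸ hvw⟩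
  by_contra! hcard
  obtain ⟨x, hxL, hx⟩ := exists_pairwise_not_of_mul_lt_card hball hcard
  have hclaw : Nonempty (subdividedClaw t ↪g G) :=
    h.nonempty_subdividedClaw_embedding_s5 hxL fun _ _ hij => not_le.1 (hx hij)
  exact not_nonempty_iff.2 hfree hclaw

end Exploration

/-- in an `S_{t,t,t}`-free graph of maximum degree at most `Δ`,
every admissible pair `(L, U)` satisfies `|L| ≤ 2·vol(Δ, 2t)`. -/
theorem stmt5 (t Δ : ℕ) (ht : 1 ≤ t) (hΔ : 3 ≤ Δ)
    {V : Type} [Fintype V] (G : SimpleGraph V)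
    (hfree : IsEmpty (subdividedClaw t ↪g G))
    (hdeg : ∀ v : V, (G.neighborSet v).ncard ≤ Δ)
    (u : V) (L U : Finset V) (h : Admissible G u L U) :
    (L.card : ℝ) ≤ 2 * vol Δ (2 * t) := by
  have hdegree : ∀ v, G.degree v ≤ Δ := fun v =>
    (Set.ncard_eq_toFinset_card' _).symm.trans_le (hdeg v)
  rw [vol_eq_cast_geom_sum hΔ]
  exact_mod_cast h.card_le hfree hdegree
end
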